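/- arXiv:1105.2076 — 3 statements merged into one kernel-verified Lean document; each statement's English description precedes it below -/
import Mathlib

section
/- Let m ≥ 1 and n_1,…,n_m ≥ 1 be integers, set w := n_1+⋯+n_m, and let x_1,…,x_m ∈ (0,1) be real numbers. For i = 1,…,m+1 set a_i := x_1·x_2⋯x_{i−1} (so a_1 = 1 and a_{m+1} = x_1⋯x_m). For j = 1,…,w define f_j : ℝ → ℝ by f_j(t) = 1/(a_i − t) if j = n_1+⋯+n_{i−1}+1 for some i ∈ {1,…,m}, and f_j(t) = 1/t otherwise. Then the integrand ∏_{j=1}^{w} f_j(t_j) is integrable on the open simplex {(t_1,…,t_w) : 0 < t_1 < ⋯ < t_w < a_{m+1}} ⊂ ℝ^w and Li_{n_1,…,n_m}(x_1,…,x_m) = ∫_{0 < t_1 < ⋯ < t_w < a_{m+1}} ∏_{j=1}^{w} f_j(t_j) dt_1⋯dt_w. -/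
open MeasureTheory
open scoped ENNReal

/-- The open simplex `{0 < t_0 < ⋯ < t_{w-1} < T}`. -/
def openSimplex (w : ℕ) (T : ℝ) : Set (Fin w → ℝ) :=
  {t | StrictMono t ∧ ∀ j, t j ∈ Set.Ioo 0 T}

/-- The iterated integral of `g 0, …, g (w - 1)` over `0 < t_0 < ⋯ < t_{w-1} < T`. -/
noncomputable def iteratedLIntegral (g : ℕ → ℝ → ℝ≥0∞) : ℕ → ℝ → ℝ≥0∞
  | 0, _ => 1
  | w + 1, T => ∫⁻ t in Set.Ioo 0 T, iteratedLIntegral g w t * g w t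

lemma measurableSet_openSimplex (w : ℕ) (T : ℝ) : MeasurableSet (openSimplex w T) := by
  have : openSimplex w T = (⋂ i : Fin w, ⋂ j : Fin w, ⋂ _ : i < j, {t | t i < t j}) ∩
      ⋂ j : Fin w, {t | t j ∈ Set.Ioo 0 T} := by
    ext t
    simp [openSimplex, StrictMono]
  rw [this]
  refine MeasurableSet.inter ?_ ?_
  · exact .iInter fun i => .iInter fun j => .iInter fun _ =>
      measurableSet_lt (measurable_pi_apply i) (measurable_pi_apply j)
  · exact .iInter fun j => measurable_pi_apply j measurableSet_Ioo

lemma strictMono_snoc_iff {α : Type*} [Preorder α] {w : ℕ} (s : Fin w → α) (u : α) :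
    StrictMono (Fin.snoc s u : Fin (w + 1) → α) ↔ StrictMono s ∧ ∀ j, s j < u := by
  constructor
  · intro h
    refine ⟨fun i j hij => ?_, fun j => ?_⟩
    · simpa using h (show i.castSucc < j.castSucc from hij)
    · simpa using h (Fin.castSucc_lt_last j)
  · rintro ⟨h, hu⟩ i j hij
    induction j using Fin.lastCases with
    | last =>
      induction i using Fin.lastCases with
      | last => exact absurd hij (lt_irrefl _)
      | cast i => simpa using hu i
    | cast j =>
      induction i using Fin.lastCases with
      | last => exact absurd hij (not_lt.2 (Fin.le_last _))
      | cast i => simpa using h (show i < j from hij)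

lemma snoc_mem_openSimplex_iff {w : ℕ} {T : ℝ} (s : Fin w → ℝ) (u : ℝ) :
    (Fin.snoc s u : Fin (w + 1) → ℝ) ∈ openSimplex (w + 1) T ↔
      u ∈ Set.Ioo 0 T ∧ s ∈ openSimplex w u := by
  simp only [openSimplex, Set.mem_ofPred_eq, strictMono_snoc_iff, Fin.forall_fin_succ',
    Fin.snoc_castSucc, Fin.snoc_last, Set.mem_Ioo]
  constructor
  · rintro ⟨⟨h1, h2⟩, h3, h4⟩
    exact ⟨h4, h1, fun j => ⟨(h3 j).1, h2 j⟩⟩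
  · rintro ⟨h1, h2, h3⟩
    exact ⟨⟨h2, fun j => (h3 j).2⟩, fun j => ⟨(h3 j).1, (h3 j).2.trans h1.2⟩, h1⟩

lemma setLIntegral_openSimplex (g : ℕ → ℝ → ℝ≥0∞) (hg : ∀ j, Measurable (g j)) (w : ℕ) (T : ℝ) :
    ∫⁻ t in openSimplex w T, ∏ j : Fin w, g j (t j) = iteratedLIntegral g w T := by
  induction w generalizing T with
  | zero =>
    have : openSimplex 0 T = Set.univ := by
      ext t
      simp [openSimplex, Subsingleton.strictMono]
    simp [this, iteratedLIntegral, volume_pi]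
  | succ w ih =>
    have hmeas : ∀ w : ℕ, Measurable fun t : Fin w → ℝ => ∏ j : Fin w, g j (t j) := fun w =>
      Finset.measurable_prod _ fun j _ => (hg j).comp (measurable_pi_apply j)
    have hmp := (volume_preserving_piFinSuccAbove (fun _ : Fin (w + 1) => ℝ) (Fin.last w)).symm
    have hsymm : ∀ p : ℝ × (Fin w → ℝ),
        (MeasurableEquiv.piFinSuccAbove (fun _ : Fin (w + 1) => ℝ) (Fin.last w)).symm p =
          (Fin.snoc p.2 p.1 : Fin (w + 1) → ℝ) := by
      intro p
      simp [MeasurableEquiv.piFinSuccAbove, Fin.insertNthEquiv, Fin.insertNth_last']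
    have hF := (hmeas (w + 1)).indicator (measurableSet_openSimplex (w + 1) T)
    rw [← lintegral_indicator (measurableSet_openSimplex _ _), ← hmp.lintegral_comp hF,
      Measure.volume_eq_prod, lintegral_prod _ (by exact (hF.comp hmp.measurable).aemeasurable),
      iteratedLIntegral, ← lintegral_indicator measurableSet_Ioo]
    refine lintegral_congr fun u => ?_
    simp only [hsymm]
    by_cases hu : u ∈ Set.Ioo 0 T
    · rw [Set.indicator_of_mem hu, ← ih u, ← lintegral_indicator (measurableSet_openSimplex _ _),
        ← lintegral_mul_const _ ((hmeas w).indicator (measurableSet_openSimplex _ _))]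
      refine lintegral_congr fun s => ?_
      by_cases hs : s ∈ openSimplex w u
      · rw [Set.indicator_of_mem hs,
          Set.indicator_of_mem ((snoc_mem_openSimplex_iff s u).2 ⟨hu, hs⟩), Fin.prod_univ_castSucc]
        simp
      · rw [Set.indicator_of_notMem hs,
          Set.indicator_of_notMem fun h => hs ((snoc_mem_openSimplex_iff s u).1 h).2, zero_mul]
    · rw [Set.indicator_of_notMem hu]
      refine (lintegral_congr fun s => ?_).trans lintegral_zero
      exact Set.indicator_of_notMem (fun h => hu ((snoc_mem_openSimplex_iff s u).1 h).1) _

/-- The part of the multiple polylogarithm series of depth `i` with largest index `k`. -/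
noncomputable def polylogCoeff (n : ℕ → ℕ) (x : ℕ → ℝ) : ℕ → ℕ → ℝ≥0∞
  | 0, k => if k = 0 then 1 else 0
  | i + 1, k => ENNReal.ofReal (x i ^ k / (k : ℝ) ^ n i) *
      ∑ s ∈ Finset.range k, polylogCoeff n x i s

lemma tsum_sum_range_eq (b v : ℕ → ℝ≥0∞) :
    ∑' k, v k * ∑ s ∈ Finset.range k, b s = ∑' s, b s * ∑' k, if s < k then v k else 0 := by
  simp_rw [← ENNReal.tsum_mul_left]
  rw [ENNReal.tsum_comm]
  refine tsum_congr fun k => ?_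
  rw [Finset.mul_sum, tsum_eq_sum (s := Finset.range k)]
  · refine Finset.sum_congr rfl fun s hs => ?_
    rw [if_pos (Finset.mem_range.1 hs), mul_comm]
  · intro s hs
    rw [if_neg (by simpa using hs), mul_zero]

lemma tsum_polylogCoeff_ne_top (n : ℕ → ℕ) (x : ℕ → ℝ) (i : ℕ)
    (hx : ∀ r < i, x r ∈ Set.Ioo (0 : ℝ) 1) : ∑' k, polylogCoeff n x i k ≠ ∞ := by
  induction i with
  | zero => simp [polylogCoeff]
  | succ i ih =>
    obtain ⟨h0, h1⟩ := hx i i.lt_succ_self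
    have hgeom : ∑' k : ℕ, ENNReal.ofReal (x i ^ k) ≠ ∞ :=
      (summable_geometric_of_lt_one h0.le h1).tsum_ofReal_ne_top
    refine ne_top_of_le_ne_top
      (ENNReal.mul_ne_top hgeom (ih fun r hr => hx r (hr.trans i.lt_succ_self))) ?_
    rw [← ENNReal.tsum_mul_right]
    refine ENNReal.tsum_le_tsum fun k => mul_le_mul' (ENNReal.ofReal_le_ofReal ?_)
      (ENNReal.sum_le_tsum _)
    rcases Nat.eq_zero_or_pos k with rfl | hk
    · rcases Nat.eq_zero_or_pos (n i) with h | h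
      · simp [h]
      · simp [h.ne']
    · exact div_le_self (by positivity) (one_le_pow₀ (by exact_mod_cast hk))

lemma tsum_strictMono_eq (n : ℕ → ℕ) (x : ℕ → ℝ) (i : ℕ) (h : ℕ → ℝ≥0∞) :
    ∑' k : {k : Fin i → ℕ // StrictMono k ∧ ∀ r, 0 < k r},
        (∏ r : Fin i, ENNReal.ofReal (x r ^ k.1 r / (k.1 r : ℝ) ^ n r)) * h (Finset.univ.sup k.1) =
      ∑' s, polylogCoeff n x i s * h s := by
  induction i generalizing h with
  | zero =>
    have : Unique {k : Fin 0 → ℕ // StrictMono k ∧ ∀ r, 0 < k r} :=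
      { default := ⟨Fin.elim0, Subsingleton.strictMono _, fun r => r.elim0⟩
        uniq := fun k => Subsingleton.elim _ _ }
    rw [tsum_eq_single default fun k hk => absurd (Unique.uniq _ k) hk,
      tsum_eq_single 0 fun k hk => by simp [polylogCoeff, hk]]
    simp [polylogCoeff]
  | succ i ih =>
    have key := ih fun s => ∑' k : ℕ, if s < k then
      ENNReal.ofReal (x i ^ k / (k : ℝ) ^ n i) * h k else 0
    rw [← tsum_sum_range_eq] at key
    have hR : ∑' s, polylogCoeff n x (i + 1) s * h s =
        ∑' k : ℕ, ENNReal.ofReal (x i ^ k / (k : ℝ) ^ n i) * h k *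
          ∑ s ∈ Finset.range k, polylogCoeff n x i s :=
      tsum_congr fun s => by rw [polylogCoeff, mul_right_comm]
    rw [hR, ← key]
    refine ((tsum_subtype {k : Fin (i + 1) → ℕ | StrictMono k ∧ ∀ r, 0 < k r} fun k =>
        (∏ r : Fin (i + 1), ENNReal.ofReal (x r ^ k r / (k r : ℝ) ^ n r)) * h (Finset.univ.sup k)).trans
      ?_).trans (tsum_subtype {k : Fin i → ℕ | StrictMono k ∧ ∀ r, 0 < k r} fun k =>
        (∏ r : Fin i, ENNReal.ofReal (x r ^ k r / (k r : ℝ) ^ n r)) *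
          ∑' K : ℕ, if Finset.univ.sup k < K then
            ENNReal.ofReal (x i ^ K / (K : ℝ) ^ n i) * h K else 0).symm
    rw [← (Fin.snocEquiv fun _ : Fin (i + 1) => ℕ).tsum_eq, ENNReal.tsum_prod',
      ENNReal.tsum_comm]
    refine tsum_congr fun k => ?_
    by_cases hk : k ∈ {k : Fin i → ℕ | StrictMono k ∧ ∀ r, 0 < k r}
    · rw [Set.indicator_of_mem hk, ← ENNReal.tsum_mul_left]
      refine tsum_congr fun K => ?_
      have hsnoc : (Fin.snocEquiv fun _ : Fin (i + 1) => ℕ) (K, k) =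
        (Fin.snoc k K : Fin (i + 1) → ℕ) := rfl
      rw [hsnoc]
      by_cases hK : Finset.univ.sup k < K
      · have hlt : ∀ r, k r < K := fun r => (Finset.le_sup (Finset.mem_univ r)).trans_lt hK
        have hsup : Finset.univ.sup (Fin.snoc k K : Fin (i + 1) → ℕ) = K := by
          refine le_antisymm (Finset.sup_le fun r _ => ?_) ?_
          · induction r using Fin.lastCases with
            | last => simp
            | cast r => simpa using (hlt r).le
          · simpa using Finset.le_sup (f := (Fin.snoc k K : Fin (i + 1) → ℕ))
              (Finset.mem_univ (Fin.last i))
        rw [if_pos hK, Set.indicator_of_mem, hsup, Fin.prod_univ_castSucc]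
        · simp [mul_assoc]
        · refine ⟨(strictMono_snoc_iff k K).2 ⟨hk.1, hlt⟩, Fin.forall_fin_succ'.2 ⟨?_, ?_⟩⟩
          · simpa using hk.2
          · simpa using (Nat.zero_le _).trans_lt hK
      · rw [if_neg hK, mul_zero, Set.indicator_of_notMem]
        rintro ⟨h1, h2⟩
        refine hK ((Finset.sup_lt_iff ?_).2 fun r _ => ((strictMono_snoc_iff k K).1 h1).2 r)
        simpa using h2 (Fin.last i)
    · rw [Set.indicator_of_notMem hk, ENNReal.tsum_eq_zero]
      intro K
      refine Set.indicator_of_notMem (fun hm => hk ⟨?_, fun r => ?_⟩) _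
      · exact ((strictMono_snoc_iff k K).1 hm.1).1
      · simpa [Fin.snocEquiv] using hm.2 r.castSucc

lemma tsum_ite_lt_eq (v : ℕ → ℝ≥0∞) (s : ℕ) :
    (∑' k, if s < k then v k else 0) = ∑' l, v (l + (s + 1)) := by
  rw [← ENNReal.summable.sum_add_tsum_nat_add' (k := s + 1), Finset.sum_eq_zero, zero_add]
  · refine tsum_congr fun l => if_pos (by lia)
  · intro k hk
    exact if_neg (by have := Finset.mem_range.1 hk; lia)

lemma setLIntegral_ofReal_mul_pow {c T : ℝ} (hc : 0 ≤ c) (hT : 0 ≤ T) (p : ℕ) :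
    ∫⁻ t in Set.Ioo 0 T, ENNReal.ofReal (c * t ^ p) =
      ENNReal.ofReal (c * (T ^ (p + 1) / (p + 1))) := by
  have hint : IntegrableOn (fun t : ℝ => c * t ^ p) (Set.Ioo 0 T) :=
    ((by fun_prop : Continuous fun t : ℝ => c * t ^ p).integrableOn_Icc).mono_set
      Set.Ioo_subset_Icc_self
  rw [← ofReal_integral_eq_lintegral_ofReal hint, ← integral_Ioc_eq_integral_Ioo,
    ← intervalIntegral.integral_of_le hT, intervalIntegral.integral_const_mul, integral_pow]
  · simp
  · filter_upwards [ae_restrict_mem measurableSet_Ioo] with t ht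
    have := ht.1
    simp only [Pi.zero_apply]
    positivity

lemma setLIntegral_tsum_mul_inv_sub {a T : ℝ} (hT : 0 < T) (hTa : T ≤ a) (b : ℕ → ℝ≥0∞) :
    ∫⁻ t in Set.Ioo 0 T, (∑' k, b k * ENNReal.ofReal ((t / a) ^ k)) * ENNReal.ofReal (a - t)⁻¹ =
      ∑' k : ℕ, ENNReal.ofReal ((T / a) ^ k / (k : ℝ) ^ 1) * ∑ s ∈ Finset.range k, b s := by
  have ha : 0 < a := hT.trans_le hTa
  have hexp : ∀ t ∈ Set.Ioo 0 T,
      (∑' k, b k * ENNReal.ofReal ((t / a) ^ k)) * ENNReal.ofReal (a - t)⁻¹ =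
        ∑' s, ∑' l, b s * ENNReal.ofReal ((a ^ (s + l + 1))⁻¹ * t ^ (s + l)) := by
    intro t ht
    have h0 : 0 ≤ t / a := div_nonneg ht.1.le ha.le
    have h1 : t / a < 1 := (div_lt_one ha).2 (ht.2.trans_le hTa)
    have hgeom : ENNReal.ofReal (a - t)⁻¹ = ∑' l : ℕ, ENNReal.ofReal (a⁻¹ * (t / a) ^ l) := by
      rw [← ENNReal.ofReal_tsum_of_nonneg (fun l => by positivity)
        ((summable_geometric_of_lt_one h0 h1).mul_left _), tsum_mul_left,
        tsum_geometric_of_lt_one h0 h1, ← mul_inv]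
      congr 2
      field_simp
    rw [hgeom, ← ENNReal.tsum_mul_right]
    refine tsum_congr fun s => ?_
    rw [← ENNReal.tsum_mul_left]
    refine tsum_congr fun l => ?_
    rw [mul_assoc, ← ENNReal.ofReal_mul (by positivity)]
    congr 2
    rw [div_pow, div_pow]
    field_simp
    ring
  rw [setLIntegral_congr_fun measurableSet_Ioo hexp, tsum_sum_range_eq,
    lintegral_tsum fun s => by fun_prop]
  refine tsum_congr fun s => ?_
  rw [tsum_ite_lt_eq, lintegral_tsum fun s => by fun_prop, ← ENNReal.tsum_mul_left]
  refine tsum_congr fun l => ?_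
  rw [lintegral_const_mul _ (by fun_prop), setLIntegral_ofReal_mul_pow (by positivity) hT.le,
    show l + (s + 1) = s + l + 1 by ring]
  congr 2
  push_cast
  rw [div_pow]
  field_simp

lemma setLIntegral_tsum_mul_inv {a T : ℝ} (hT : 0 < T) (ha : 0 < a) (q : ℕ) (b : ℕ → ℝ≥0∞)
    (hb : b 0 = 0) :
    ∫⁻ t in Set.Ioo 0 T,
        (∑' k : ℕ, ENNReal.ofReal ((t / a) ^ k / (k : ℝ) ^ q) * b k) * ENNReal.ofReal t⁻¹ =
      ∑' k : ℕ, ENNReal.ofReal ((T / a) ^ k / (k : ℝ) ^ (q + 1)) * b k := by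
  have hexp : ∀ t ∈ Set.Ioo 0 T,
      (∑' k : ℕ, ENNReal.ofReal ((t / a) ^ k / (k : ℝ) ^ q) * b k) * ENNReal.ofReal t⁻¹ =
        ∑' k : ℕ, ENNReal.ofReal ((a ^ k * (k : ℝ) ^ q)⁻¹ * t ^ (k - 1)) * b k := by
    intro t ht
    have h0 : 0 < t := ht.1
    rw [← ENNReal.tsum_mul_right]
    refine tsum_congr fun k => ?_
    rcases k with _ | k
    · simp [hb]
    · rw [mul_right_comm, ← ENNReal.ofReal_mul (by positivity)]
      congr 2
      rw [div_pow, Nat.add_sub_cancel]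
      field_simp
      ring
  rw [setLIntegral_congr_fun measurableSet_Ioo hexp, lintegral_tsum fun s => by fun_prop]
  refine tsum_congr fun k => ?_
  rcases k with _ | k
  · simp [hb]
  · rw [lintegral_mul_const _ (by fun_prop), setLIntegral_ofReal_mul_pow (by positivity) hT.le]
    congr 2
    rw [div_pow, Nat.add_sub_cancel]
    push_cast
    field_simp
    ring

/-- Power series expansion of the iterated integral at the ends of the blocks of forms. -/
lemma iteratedLIntegral_eq_tsum_polylogCoeff (m : ℕ) (n : ℕ → ℕ) (x : ℕ → ℝ) (f : ℕ → ℝ → ℝ)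
    (hn : ∀ i < m, 1 ≤ n i) (hx : ∀ i < m, x i ∈ Set.Ioo (0 : ℝ) 1)
    (hf1 : ∀ i < m, f (∑ r ∈ Finset.range i, n r) = fun t => (∏ r ∈ Finset.range i, x r - t)⁻¹)
    (hf2 : ∀ i < m, ∀ p, 1 ≤ p → p < n i →
      f (∑ r ∈ Finset.range i, n r + p) = fun t => t⁻¹)
    (i : ℕ) (hi : i ≤ m) (T : ℝ) (hT : 0 < T) (hTa : T ≤ ∏ r ∈ Finset.range i, x r) :
    iteratedLIntegral (fun j t => ENNReal.ofReal (f j t)) (∑ r ∈ Finset.range i, n r) T =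
      ∑' k, polylogCoeff n x i k * ENNReal.ofReal ((T / ∏ r ∈ Finset.range i, x r) ^ k) := by
  induction i generalizing T with
  | zero =>
    rw [tsum_eq_single 0 fun k hk => by simp [polylogCoeff, hk]]
    simp [polylogCoeff, iteratedLIntegral]
  | succ i ih =>
    have him : i < m := hi
    obtain ⟨hx0, hx1⟩ := hx i him
    set a := ∏ r ∈ Finset.range i, x r with ha
    set N := ∑ r ∈ Finset.range i, n r with hN
    have ha0 : 0 < a := Finset.prod_pos fun r hr =>
      (hx r ((Finset.mem_range.1 hr).trans him)).1
    have block : ∀ q, q + 1 ≤ n i → ∀ T, 0 < T → T ≤ a →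
        iteratedLIntegral (fun j t => ENNReal.ofReal (f j t)) (N + (q + 1)) T =
          ∑' k : ℕ, ENNReal.ofReal ((T / a) ^ k / (k : ℝ) ^ (q + 1)) *
            ∑ s ∈ Finset.range k, polylogCoeff n x i s := by
      intro q
      induction q with
      | zero =>
        intro _ T hT hTa
        rw [zero_add, iteratedLIntegral, ← setLIntegral_tsum_mul_inv_sub hT hTa]
        refine setLIntegral_congr_fun measurableSet_Ioo fun t ht => ?_
        have hfN : f N = fun t => (a - t)⁻¹ := hf1 i him
        simp only [hfN]
        rw [ih him.le t ht.1 (ht.2.le.trans hTa)]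
      | succ q ihq =>
        intro hq T hT hTa
        rw [← add_assoc, iteratedLIntegral, ← setLIntegral_tsum_mul_inv hT ha0 _ _ (by simp)]
        refine setLIntegral_congr_fun measurableSet_Ioo fun t ht => ?_
        have hfN : f (N + (q + 1)) = fun t => t⁻¹ := hf2 i him (q + 1) (by lia) (by lia)
        simp only [hfN]
        rw [ihq (by lia) t ht.1 (ht.2.le.trans hTa)]
    rw [Finset.prod_range_succ, ← ha] at hTa ⊢
    obtain ⟨q, hq⟩ := Nat.exists_eq_add_of_le' (hn i him)
    rw [Finset.sum_range_succ, ← hN, hq,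
      block q hq.ge T hT (hTa.trans (mul_le_of_le_one_right ha0.le hx1.le))]
    refine tsum_congr fun k => ?_
    rw [polylogCoeff, mul_right_comm, ← ENNReal.ofReal_mul (by positivity), hq]
    congr 2
    rw [div_pow, div_pow, mul_pow]
    field_simp

lemma prod_filter_lt_eq_prod_range {M : Type*} [CommMonoid M] {m : ℕ} (y : ℕ → M) (i : Fin m) :
    ∏ r ∈ Finset.univ.filter (fun r : Fin m => r < i), y r = ∏ r ∈ Finset.range i, y r := by
  refine Finset.prod_bij (fun r _ => (r : ℕ)) ?_ ?_ ?_ ?_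
  · intro r hr
    simpa using hr
  · intro r _ s _ h
    exact Fin.ext h
  · intro r hr
    have hri := Finset.mem_range.1 hr
    exact ⟨⟨r, hri.trans i.2⟩, Finset.mem_filter.2 ⟨Finset.mem_univ _, hri⟩, rfl⟩
  · intro r _
    rfl

/-- Iterated-integral representation of the multiple polylogarithm
`Li_{n_1,…,n_m}(x_1,…,x_m)` for real `x_i ∈ (0,1)`:
the integrand `∏_j f_j(t_j)` is integrable on the open simplex
`{0 < t_1 < ⋯ < t_w < x_1⋯x_m}` and the integral equals the series. -/
theorem stmt0 (m : ℕ) (hm : 1 ≤ m) (n : Fin m → ℕ) (hn : ∀ i, 1 ≤ n i)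
    (w : ℕ) (hw : w = ∑ i, n i)
    (x : Fin m → ℝ) (hx : ∀ i, x i ∈ Set.Ioo (0 : ℝ) 1)
    (a : Fin m → ℝ)
    (ha : ∀ i : Fin m, a i = ∏ r ∈ Finset.univ.filter (fun r : Fin m => r < i), x r)
    (A : ℝ) (hA : A = ∏ i, x i)
    (f : Fin w → ℝ → ℝ)
    (hf1 : ∀ j : Fin w, ∀ i : Fin m,
      (j : ℕ) = ∑ r ∈ Finset.univ.filter (fun r : Fin m => r < i), n r →
        f j = fun t => (a i - t)⁻¹)
    (hf2 : ∀ j : Fin w,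
      (∀ i : Fin m, (j : ℕ) ≠ ∑ r ∈ Finset.univ.filter (fun r : Fin m => r < i), n r) →
        f j = fun t => t⁻¹)
    (S : Set (Fin w → ℝ))
    (hS : S = {t : Fin w → ℝ | StrictMono t ∧ ∀ j, t j ∈ Set.Ioo 0 A}) :
    IntegrableOn (fun t : Fin w → ℝ => ∏ j, f j (t j)) S volume ∧
    (∑' k : {k : Fin m → ℕ // StrictMono k ∧ ∀ i, 0 < k i},
        ∏ i, x i ^ (k.1 i) / ((k.1 i : ℝ) ^ (n i))) =
      ∫ t in S, ∏ j, f j (t j) := by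
  classical
  obtain ⟨n', hn'⟩ : ∃ n' : ℕ → ℕ, ∀ i : Fin m, n' i = n i :=
    ⟨fun i => if h : i < m then n ⟨i, h⟩ else 0, fun i => by simp⟩
  obtain ⟨x', hx'⟩ : ∃ x' : ℕ → ℝ, ∀ i : Fin m, x' i = x i :=
    ⟨fun i => if h : i < m then x ⟨i, h⟩ else 0, fun i => by simp⟩
  obtain ⟨f', hf'⟩ : ∃ f' : ℕ → ℝ → ℝ, ∀ j, f' j = if h : j < w then f ⟨j, h⟩ else 0 :=
    ⟨_, fun _ => rfl⟩
  have hff : ∀ j : Fin w, f' j = f j := fun j => by simp [hf']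
  simp_rw [← hn', ← hx'] at *
  have hxl : ∀ i < m, x' i ∈ Set.Ioo (0 : ℝ) 1 := fun i hi => hx ⟨i, hi⟩
  have hnl : ∀ i < m, 1 ≤ n' i := fun i hi => hn ⟨i, hi⟩
  have hsum : ∀ i : Fin m, ∑ r ∈ Finset.univ.filter (fun r : Fin m => r < i), n' r =
      ∑ r ∈ Finset.range i, n' r :=
    fun i => prod_filter_lt_eq_prod_range (M := Multiplicative ℕ) n' i
  simp_rw [prod_filter_lt_eq_prod_range] at ha
  simp_rw [hsum] at hf1 hf2
  rw [Fin.sum_univ_eq_sum_range] at hw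
  rw [Fin.prod_univ_eq_prod_range] at hA
  have hNmono : Monotone fun i => ∑ r ∈ Finset.range i, n' r := fun i j hij =>
    Finset.sum_le_sum_of_subset (Finset.range_mono hij)
  have hblock : ∀ i < m, ∀ p < n' i, ∑ r ∈ Finset.range i, n' r + p < w := by
    intro i hi p hp
    have := hNmono (show i + 1 ≤ m from hi)
    simp only [Finset.sum_range_succ] at this
    lia
  have hf1' : ∀ i < m, f' (∑ r ∈ Finset.range i, n' r) =
      fun t => (∏ r ∈ Finset.range i, x' r - t)⁻¹ := by
    intro i hi
    have h := hblock i hi 0 (hnl i hi)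
    rw [add_zero] at h
    rw [hff ⟨_, h⟩, hf1 ⟨_, h⟩ ⟨i, hi⟩ rfl, ha]
  have hf2' : ∀ i < m, ∀ p, 1 ≤ p → p < n' i →
      f' (∑ r ∈ Finset.range i, n' r + p) = fun t => t⁻¹ := by
    intro i hi p hp hpn
    rw [hff ⟨_, hblock i hi p hpn⟩]
    refine hf2 _ fun i' heq => ?_
    simp only at heq
    rcases le_or_gt (i' : ℕ) i with hle | hlt
    · have := hNmono hle
      simp only at this
      lia
    · have := hNmono (show i + 1 ≤ i' from hlt)
      simp only [Finset.sum_range_succ] at this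
      lia
  have hcases : ∀ j : Fin w, (∃ i : Fin m, f j = fun t => (a i - t)⁻¹) ∨ f j = fun t => t⁻¹ := by
    intro j
    by_cases h : ∃ i : Fin m, (j : ℕ) = ∑ r ∈ Finset.range i, n' r
    · exact h.elim fun i hi => Or.inl ⟨i, hf1 j i hi⟩
    · exact Or.inr (hf2 j (not_exists.1 h))
  have hfm : ∀ j : Fin w, Measurable (f j) := by
    intro j
    rcases hcases j with ⟨i, h⟩ | h <;> rw [h] <;> fun_prop
  have hfm' : ∀ j, Measurable fun t => ENNReal.ofReal (f' j t) := by
    intro j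
    refine ENNReal.measurable_ofReal.comp ?_
    by_cases h : j < w
    · rw [hff ⟨j, h⟩]
      exact hfm _
    · rw [hf', dif_neg h]
      exact measurable_const
  have hApos : 0 < A := hA ▸ Finset.prod_pos fun r hr => (hxl r (Finset.mem_range.1 hr)).1
  have hAa : ∀ i, A ≤ a i := by
    intro i
    rw [hA, ha, ← Finset.prod_range_mul_prod_Ico _ i.2.le]
    refine mul_le_of_le_one_right
      (Finset.prod_nonneg fun r hr => (hxl r ((Finset.mem_range.1 hr).trans i.2)).1.le)
      (Finset.prod_le_one (fun r hr => ?_) fun r hr => ?_)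
    · exact (hxl r (Finset.mem_Ico.1 hr).2).1.le
    · exact (hxl r (Finset.mem_Ico.1 hr).2).2.le
  have hfnonneg : ∀ j : Fin w, ∀ t ∈ Set.Ioo 0 A, 0 ≤ f j t := by
    intro j t ht
    rcases hcases j with ⟨i, h⟩ | h <;> rw [h]
    · exact inv_nonneg.2 (sub_nonneg.2 (ht.2.le.trans (hAa i)))
    · exact inv_nonneg.2 ht.1.le
  have hS' : S = openSimplex w A := hS
  have hSm : MeasurableSet S := hS' ▸ measurableSet_openSimplex w A
  have hmeas : Measurable fun t : Fin w → ℝ => ∏ j, f j (t j) :=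
    Finset.measurable_prod _ fun j _ => (hfm j).comp (measurable_pi_apply j)
  have hmem : ∀ t ∈ S, ∀ j, t j ∈ Set.Ioo 0 A := fun t ht => (hS ▸ ht).2
  have hnonneg : ∀ᵐ t ∂volume.restrict S, 0 ≤ ∏ j, f j (t j) := by
    filter_upwards [ae_restrict_mem hSm] with t ht
    exact Finset.prod_nonneg fun j _ => hfnonneg j _ (hmem t ht j)
  have hlint : ∫⁻ t in S, ENNReal.ofReal (∏ j, f j (t j)) = ∑' k, polylogCoeff n' x' m k := by
    have hseries := iteratedLIntegral_eq_tsum_polylogCoeff m n' x' f' hnl hxl hf1' hf2' m le_rfl A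
      hApos hA.le
    rw [← hA, div_self hApos.ne', ← hw] at hseries
    simp only [one_pow, ENNReal.ofReal_one, mul_one] at hseries
    rw [← hseries, ← setLIntegral_openSimplex _ hfm', ← hS']
    refine setLIntegral_congr_fun hSm fun t ht => ?_
    simp only [hff]
    exact ENNReal.ofReal_prod_of_nonneg fun j _ => hfnonneg j _ (hmem t ht j)
  have hfin := tsum_polylogCoeff_ne_top n' x' m hxl
  refine ⟨⟨hmeas.aestronglyMeasurable, ?_⟩, ?_⟩
  · rw [hasFiniteIntegral_iff_ofReal hnonneg, hlint]
    exact hfin.lt_top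
  · have htsum := tsum_strictMono_eq n' x' m fun _ => 1
    simp only [mul_one] at htsum
    rw [integral_eq_lintegral_of_nonneg_ae hnonneg hmeas.aestronglyMeasurable, hlint, ← htsum,
      ENNReal.tsum_toReal_eq fun k => ENNReal.prod_ne_top fun r _ => ENNReal.ofReal_ne_top]
    refine tsum_congr fun k => ?_
    rw [ENNReal.toReal_prod]
    refine Finset.prod_congr rfl fun r _ => (ENNReal.toReal_ofReal ?_).symm
    exact div_nonneg (pow_nonneg (hx r).1.le _) (by positivity)
end

section
/- Let m ≥ 2 and let (v_1,…,v_m) be a basis of ℤ^m; set v_0 := −(v_1+⋯+v_m). Writing x ≡ y for x − y ∈ R (the double shuffle subgroup), the following dihedral symmetry relations hold in ℤ[P]/R: (i) cyclic symmetry: [v_1,…,v_m] ≡ [v_2,…,v_m,v_0]; (ii) reversal: [v_1,…,v_m] ≡ (−1)^{m+1}[v_{m−1},v_{m−2},…,v_1,v_0]; (iii) inversion: [v_1,…,v_m] ≡ [−v_1,…,−v_m]. -/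
/-- The set of `(k, n−k)`-shuffles: permutations `σ` of `{0,…,n−1}` such that
`σ⁻¹` is increasing on the first `k` letters and on the last `n−k` letters. -/
def shuffles (n k : ℕ) : Finset (Equiv.Perm (Fin n)) :=
  Finset.univ.filter fun σ =>
    (∀ i j : Fin n, (i : ℕ) < (j : ℕ) → (j : ℕ) < k → σ⁻¹ i < σ⁻¹ j) ∧
    (∀ i j : Fin n, (i : ℕ) < (j : ℕ) → k ≤ (i : ℕ) → σ⁻¹ i < σ⁻¹ j)

/-- A tuple of lattice vectors is a basis iff it generates `ℤ^m` as a `ℤ`-module. -/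
def IsLatBasis {m : ℕ} (v : Fin m → (Fin m → ℤ)) : Prop :=
  Submodule.span ℤ (Set.range v) = ⊤

/-- `(v_1,…,v_m) ↦ (v_2−v_1, v_3−v_2, …, v_m−v_{m−1}, −v_m)`, so that
`[v_1:⋯:v_m] = [diffs v]`. -/
def diffs {m : ℕ} (v : Fin m → (Fin m → ℤ)) : Fin m → (Fin m → ℤ) :=
  fun i => if h : (i : ℕ) + 1 < m then v ⟨(i : ℕ) + 1, h⟩ - v i else - v i

/-- The generators of the double shuffle subgroup `R ⊆ ℤ[P]`:
`Σ_{σ∈Σ_{k,m−k}} [v_{σ(1)},…,v_{σ(m)}]` and `Σ_{σ∈Σ_{k,m−k}} [v_{σ(1)}:⋯:v_{σ(m)}]`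
for bases `v` and `1 ≤ k ≤ m−1`. -/
def shuffleRelators (m : ℕ) : Set (FreeAbelianGroup (Fin m → (Fin m → ℤ))) :=
  {x | ∃ (v : Fin m → (Fin m → ℤ)) (k : ℕ), IsLatBasis v ∧ 1 ≤ k ∧ k ≤ m - 1 ∧
    (x = ∑ σ ∈ shuffles m k, FreeAbelianGroup.of (fun i => v (σ i)) ∨
     x = ∑ σ ∈ shuffles m k, FreeAbelianGroup.of (diffs (fun i => v (σ i))))}

/-- The double shuffle subgroup `R`. -/
def doubleShuffleSubgroup (m : ℕ) : AddSubgroup (FreeAbelianGroup (Fin m → (Fin m → ℤ))) :=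
  AddSubgroup.closure (shuffleRelators m)

section DihedralSymmetry

open Finset hiding diffs

section Antipode

variable {m : ℕ}

/-- Permutations whose inverse is decreasing on the letters `< a` and increasing on the
letters `≥ b`. -/
def valleyPerms (m a b : ℕ) : Finset (Equiv.Perm (Fin m)) :=
  univ.filter fun τ =>
    (∀ i j : Fin m, (i : ℕ) < j → (j : ℕ) < a → τ⁻¹ j < τ⁻¹ i) ∧
    (∀ i j : Fin m, (i : ℕ) < j → b ≤ (i : ℕ) → τ⁻¹ i < τ⁻¹ j)

/-- The involution of `Fin m` reversing the first `k` letters. -/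
def revPrefix (m k : ℕ) (hk : k ≤ m) : Equiv.Perm (Fin m) :=
  Function.Involutive.toPerm
    (fun i => if h : (i : ℕ) < k then ⟨k - 1 - i, by omega⟩ else i) (by
      intro i
      by_cases h : (i : ℕ) < k
      · have h' : k - 1 - (i : ℕ) < k := by omega
        ext
        simp only [h, h', dif_pos]
        omega
      · simp [h])

lemma revPrefix_apply_lt {k : ℕ} (hk : k ≤ m) (i : Fin m) (h : (i : ℕ) < k) :
    revPrefix m k hk i = ⟨k - 1 - i, by omega⟩ :=
  dif_pos h

lemma revPrefix_apply_ge {k : ℕ} (hk : k ≤ m) (i : Fin m) (h : k ≤ (i : ℕ)) :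
    revPrefix m k hk i = i :=
  dif_neg h.not_gt

lemma revPrefix_mul_self {k : ℕ} (hk : k ≤ m) : revPrefix m k hk * revPrefix m k hk = 1 := by
  ext i : 1
  exact (revPrefix m k hk).left_inv i

lemma revPrefix_inv {k : ℕ} (hk : k ≤ m) : (revPrefix m k hk)⁻¹ = revPrefix m k hk :=
  inv_eq_of_mul_eq_one_left (revPrefix_mul_self hk)

lemma mem_valleyPerms_revPrefix_mul {k : ℕ} (hk : k ≤ m) (σ : Equiv.Perm (Fin m)) :
    revPrefix m k hk * σ ∈ valleyPerms m k k ↔ σ ∈ shuffles m k := by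
  simp only [valleyPerms, shuffles, mem_filter, mem_univ, true_and, mul_inv_rev, revPrefix_inv,
    Equiv.Perm.mul_apply]
  refine and_congr ⟨fun H i j hij hj => ?_, fun H i j hij hj => ?_⟩
    ⟨fun H i j hij hi => ?_, fun H i j hij hi => ?_⟩
  · have := H ⟨k - 1 - j, by omega⟩ ⟨k - 1 - i, by omega⟩ (by simp only; omega)
      (by simp only; omega)
    rw [revPrefix_apply_lt hk _ (by simp only; omega),
      revPrefix_apply_lt hk _ (by simp only; omega)] at this
    convert this using 2 <;> ext <;> simp only <;> omega
  · rw [revPrefix_apply_lt hk _ hj, revPrefix_apply_lt hk _ (hij.trans hj)]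
    exact H _ _ (by simp only; omega) (by simp only; omega)
  · have := H i j hij hi
    rwa [revPrefix_apply_ge hk _ hi, revPrefix_apply_ge hk _ (by omega)] at this
  · rw [revPrefix_apply_ge hk _ hi, revPrefix_apply_ge hk _ (by omega)]
    exact H i j hij hi

lemma sum_shuffles_revPrefix {A : Type*} [AddCommGroup A] (f : Equiv.Perm (Fin m) → A)
    {k : ℕ} (hk : k ≤ m) :
    ∑ σ ∈ shuffles m k, f (revPrefix m k hk * σ) = ∑ τ ∈ valleyPerms m k k, f τ :=
  sum_equiv (Equiv.mulLeft (revPrefix m k hk))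
    (fun σ => (mem_valleyPerms_revPrefix_mul hk σ).symm) (fun _ _ => rfl)

lemma valleyPerms_eq_filter_left {k : ℕ} (hk : k + 1 < m) :
    valleyPerms m (k + 2) (k + 1) = (valleyPerms m (k + 1) (k + 1)).filter fun τ =>
      τ⁻¹ ⟨k + 1, hk⟩ < τ⁻¹ ⟨k, by omega⟩ := by
  ext τ
  simp only [valleyPerms, mem_filter, mem_univ, true_and]
  constructor
  · rintro ⟨h₁, h₂⟩
    exact ⟨⟨fun i j hij hj => h₁ i j hij (by omega), h₂⟩, h₁ _ _ (by simp) (by simp)⟩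
  · rintro ⟨⟨h₁, h₂⟩, h₃⟩
    refine ⟨fun i j hij hj => ?_, h₂⟩
    rcases Nat.lt_or_ge j (k + 1) with hj' | hj'
    · exact h₁ i j hij hj'
    · obtain rfl : j = ⟨k + 1, hk⟩ := Fin.ext (by simp only; omega)
      rcases Nat.lt_or_ge i k with hi | hi
      · exact h₃.trans (h₁ i ⟨k, by omega⟩ hi (by simp))
      · obtain rfl : i = ⟨k, Nat.lt_of_succ_lt hk⟩ := Fin.ext (by simp only at hij ⊢; omega)
        exact h₃

lemma valleyPerms_eq_filter_right {k : ℕ} (hk : k + 1 < m) :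
    valleyPerms m (k + 1) k = (valleyPerms m (k + 1) (k + 1)).filter fun τ =>
      ¬ τ⁻¹ ⟨k + 1, hk⟩ < τ⁻¹ ⟨k, by omega⟩ := by
  ext τ
  simp only [valleyPerms, mem_filter, mem_univ, true_and]
  constructor
  · rintro ⟨h₁, h₂⟩
    exact ⟨⟨h₁, fun i j hij hi => h₂ i j hij (by omega)⟩,
      (h₂ ⟨k, by omega⟩ ⟨k + 1, hk⟩ (by simp) (by simp)).not_gt⟩
  · rintro ⟨⟨h₁, h₂⟩, h₃⟩
    have h₄ : τ⁻¹ ⟨k, by omega⟩ < τ⁻¹ ⟨k + 1, hk⟩ :=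
      lt_of_le_of_ne (not_lt.mp h₃) fun h => by simpa using τ⁻¹.injective h
    refine ⟨h₁, fun i j hij hi => ?_⟩
    rcases Nat.lt_or_ge k i with hi' | hi'
    · exact h₂ i j hij hi'
    · obtain rfl : i = ⟨k, Nat.lt_of_succ_lt hk⟩ := Fin.ext (by simp only; omega)
      rcases Nat.lt_or_ge (k + 1) j with hj | hj
      · exact h₄.trans (h₂ ⟨k + 1, hk⟩ j hj (by simp))
      · obtain rfl : j = ⟨k + 1, hk⟩ := Fin.ext (by simp only at hij ⊢; omega)
        exact h₄

lemma sum_valleyPerms_succ {A : Type*} [AddCommGroup A] (f : Equiv.Perm (Fin m) → A)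
    {k : ℕ} (hk : k + 1 < m) :
    ∑ τ ∈ valleyPerms m (k + 2) (k + 1), f τ + ∑ τ ∈ valleyPerms m (k + 1) k, f τ =
      ∑ τ ∈ valleyPerms m (k + 1) (k + 1), f τ := by
  rw [valleyPerms_eq_filter_left hk, valleyPerms_eq_filter_right hk]
  exact sum_filter_add_sum_filter_not _ _ _

lemma valleyPerms_one_zero : valleyPerms m 1 0 = {1} := by
  ext τ
  simp only [valleyPerms, mem_filter, mem_univ, true_and, mem_singleton]
  constructor
  · rintro ⟨-, h⟩
    have hmono : StrictMono (τ⁻¹ : Equiv.Perm (Fin m)) := fun i j hij => h i j hij (Nat.zero_le _)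
    have := (hmono.range_inj strictMono_id).mp (by simp)
    rw [← inv_eq_one]
    ext i : 1
    exact congrFun this i
  · rintro rfl
    exact ⟨fun i j hij hj => by omega, fun i j hij _ => by simpa using hij⟩

lemma valleyPerms_top {b : ℕ} (hb : m ≤ b + 1) : valleyPerms m m b = {Fin.revPerm} := by
  ext τ
  simp only [valleyPerms, mem_filter, mem_univ, true_and, mem_singleton]
  constructor
  · rintro ⟨h, -⟩
    have hmono : StrictMono fun i => Fin.rev (τ⁻¹ i) := fun i j hij =>
      Fin.rev_lt_rev.mpr (h i j hij j.2)
    have := (hmono.range_inj strictMono_id).mp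
      (by
        rw [Set.range_id]
        exact (Fin.rev_involutive.surjective.comp (τ⁻¹).surjective).range_eq)
    ext i : 1
    have hi := congrFun this (τ i)
    have hinv : τ⁻¹ (τ i) = i := τ.symm_apply_apply i
    simp only [hinv, id] at hi
    rw [← hi, Fin.revPerm_apply]
  · rintro rfl
    have hrev : (Fin.revPerm : Equiv.Perm (Fin m))⁻¹ = Fin.revPerm := Fin.revPerm_symm
    simp only [hrev, Fin.revPerm_apply, Fin.rev_lt_rev]
    exact ⟨fun i j hij _ => hij, fun i j hij hi => by omega⟩

/-- The antipode identity: a function on permutations killed by all shuffle sums is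
invariant, up to sign, under reversal of words. -/
lemma eq_revPerm_of_shuffle {A : Type*} [AddCommGroup A] (hm : 1 ≤ m)
    (f : Equiv.Perm (Fin m) → A)
    (hf : ∀ (ρ : Equiv.Perm (Fin m)) (k : ℕ), 1 ≤ k → k ≤ m - 1 →
      ∑ σ ∈ shuffles m k, f (ρ * σ) = 0) :
    f 1 = (-1 : ℤ) ^ (m + 1) • f Fin.revPerm := by
  have key : ∀ k, k < m →
      ∑ τ ∈ valleyPerms m (k + 1) k, f τ = (-1 : ℤ) ^ k • f 1 := by
    intro k
    induction k with
    | zero => intro _; simp [valleyPerms_one_zero]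
    | succ k ih =>
      intro hk
      have h := sum_valleyPerms_succ f hk
      rw [← sum_shuffles_revPrefix f hk.le, hf _ _ (by omega) (by omega), ih (by omega)] at h
      rw [eq_neg_of_add_eq_zero_left h, pow_succ]
      simp
  obtain ⟨n, rfl⟩ : ∃ n, m = n + 1 := ⟨m - 1, by omega⟩
  have h := key n (by omega)
  rw [valleyPerms_top (by omega), sum_singleton] at h
  rw [h, smul_smul, ← pow_add, Even.neg_one_pow ⟨n + 1, by ring⟩, one_smul]

end Antipode

section Insertion

variable {n : ℕ}

/-- The `(1, n)`-shuffles insert the first letter at an arbitrary position. -/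
lemma shuffles_one : shuffles (n + 1) 1 = univ.image Fin.cycleRange := by
  ext τ
  simp only [shuffles, mem_filter, mem_univ, true_and, mem_image]
  constructor
  · rintro ⟨-, h⟩
    refine ⟨τ⁻¹ 0, ?_⟩
    have hmono : StrictMono fun i : Fin n => τ⁻¹ i.succ := fun i j hij =>
      h _ _ (by simpa using hij) (by simp)
    have hrange : Set.range (fun i : Fin n => τ⁻¹ i.succ) = Set.range (τ⁻¹ 0).succAbove := by
      rw [Fin.range_succAbove, Set.range_comp' (⇑τ⁻¹) Fin.succ, Fin.range_succ,
        Set.image_compl_eq (τ⁻¹).bijective, Set.image_singleton]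
    have heq := (hmono.range_inj (Fin.strictMono_succAbove _)).mp hrange
    have hinv : (Fin.cycleRange (τ⁻¹ 0))⁻¹ = τ⁻¹ := by
      ext i : 1
      refine Fin.cases ?_ (fun i => ?_) i
      · exact Fin.cycleRange_symm_zero _
      · exact (Fin.cycleRange_symm_succ _ i).trans (congrFun heq i).symm
    exact inv_injective hinv
  · rintro ⟨p, rfl⟩
    refine ⟨fun i j hij hj => by omega, fun i j hij hi => ?_⟩
    obtain ⟨i, rfl⟩ := Fin.exists_succ_eq.mpr (show i ≠ 0 by rintro rfl; simp at hi)
    obtain ⟨j, rfl⟩ := Fin.exists_succ_eq.mpr (show j ≠ 0 by rintro rfl; simp at hij)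
    change (Fin.cycleRange p).symm _ < (Fin.cycleRange p).symm _
    rw [Fin.cycleRange_symm_succ, Fin.cycleRange_symm_succ]
    exact Fin.strictMono_succAbove _ (by simpa using hij)

lemma sum_shuffles_one {A : Type*} [AddCommMonoid A] (f : Equiv.Perm (Fin (n + 1)) → A) :
    ∑ σ ∈ shuffles (n + 1) 1, f σ = ∑ p, f (Fin.cycleRange p) := by
  rw [shuffles_one, sum_image]
  intro p _ q _ h
  have := congrArg (fun σ : Equiv.Perm (Fin (n + 1)) => σ.symm 0) h
  simpa using this

end Insertion

section Bases

variable {m : ℕ}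

lemma IsLatBasis.of_mem_span {v w : Fin m → (Fin m → ℤ)} (hv : IsLatBasis v)
    (h : ∀ i, v i ∈ Submodule.span ℤ (Set.range w)) : IsLatBasis w := by
  rw [IsLatBasis, eq_top_iff, ← hv, Submodule.span_le]
  rintro _ ⟨i, rfl⟩
  exact h i

lemma IsLatBasis.comp_perm {v : Fin m → (Fin m → ℤ)} (hv : IsLatBasis v)
    (σ : Equiv.Perm (Fin m)) : IsLatBasis (fun i => v (σ i)) :=
  hv.of_mem_span fun i => Submodule.subset_span ⟨σ.symm i, by simp⟩

lemma IsLatBasis.neg {v : Fin m → (Fin m → ℤ)} (hv : IsLatBasis v) : IsLatBasis (-v) :=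
  hv.of_mem_span fun i => by
    rw [← neg_neg (v i)]
    exact neg_mem (Submodule.subset_span ⟨i, rfl⟩)

lemma diffs_mem_span (v : Fin m → (Fin m → ℤ)) (i : Fin m) :
    diffs v i ∈ Submodule.span ℤ (Set.range v) := by
  unfold diffs
  split_ifs
  · exact sub_mem (Submodule.subset_span ⟨_, rfl⟩) (Submodule.subset_span ⟨_, rfl⟩)
  · exact neg_mem (Submodule.subset_span ⟨_, rfl⟩)

lemma IsLatBasis.of_diffs {v : Fin m → (Fin m → ℤ)} (hv : IsLatBasis (diffs v)) :
    IsLatBasis v :=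
  hv.of_mem_span (diffs_mem_span v)

lemma IsLatBasis.diffs {v : Fin m → (Fin m → ℤ)} (hv : IsLatBasis v) :
    IsLatBasis (diffs v) := by
  refine hv.of_mem_span fun i => ?_
  suffices h : ∀ (d i : ℕ) (hi : i < m), i + d + 1 = m →
      v ⟨i, hi⟩ ∈ Submodule.span ℤ (Set.range (_root_.diffs v)) from
    h (m - 1 - i) i i.2 (by omega)
  intro d
  induction d with
  | zero =>
    intro i hi hd
    have : v ⟨i, hi⟩ = -_root_.diffs v ⟨i, hi⟩ := by
      simp [_root_.diffs, show ¬ i + 1 < m by omega]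
    rw [this]
    exact neg_mem (Submodule.subset_span ⟨_, rfl⟩)
  | succ d ih =>
    intro i hi hd
    have : v ⟨i, hi⟩ = v ⟨i + 1, by omega⟩ - _root_.diffs v ⟨i, hi⟩ := by
      simp [_root_.diffs, show i + 1 < m by omega]
    rw [this]
    exact sub_mem (ih _ _ (by omega)) (Submodule.subset_span ⟨_, rfl⟩)

lemma diffs_neg (v : Fin m → (Fin m → ℤ)) : diffs (-v) = -diffs v := by
  ext1 i
  simp only [diffs, Pi.neg_apply]
  split_ifs <;> abel

/-- The section `v ↦ (−(v_1+⋯+v_m), …, −(v_{m−1}+v_m), −v_m)` of `diffs`. -/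
def negTailSum (v : Fin m → (Fin m → ℤ)) : Fin m → (Fin m → ℤ) :=
  fun i => -∑ j ∈ Ici i, v j

lemma diffs_negTailSum (v : Fin m → (Fin m → ℤ)) : diffs (negTailSum v) = v := by
  ext1 i
  simp only [diffs, negTailSum]
  split_ifs with h
  · have : Ici i = insert i (Ici ⟨(i : ℕ) + 1, h⟩) := by
      ext j
      simp only [mem_Ici, mem_insert, Fin.le_def, Fin.ext_iff]
      omega
    rw [this, sum_insert (by simp [Fin.le_def])]
    abel
  · have : Ici i = {i} := by
      ext j
      simp only [mem_Ici, mem_singleton, Fin.le_def, Fin.ext_iff]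
      omega
    simp [this]

end Bases

section Rotation

variable {n : ℕ}

/-- Cyclic rotation in the coordinates of `diffs`: it sends `(x_1,…,x_m)` to
`(x_2−x_1,…,x_m−x_1,−x_1)`. -/
def rotate (x : Fin (n + 2) → (Fin (n + 2) → ℤ)) : Fin (n + 2) → (Fin (n + 2) → ℤ) :=
  fun i => if h : (i : ℕ) + 1 < n + 2 then x ⟨i + 1, h⟩ - x 0 else -x 0

lemma rotate_of_lt (x : Fin (n + 2) → (Fin (n + 2) → ℤ)) {i : ℕ} (h : i + 1 < n + 2) :
    rotate x ⟨i, by omega⟩ = x ⟨i + 1, h⟩ - x 0 := by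
  simp [rotate, h]

lemma rotate_last (x : Fin (n + 2) → (Fin (n + 2) → ℤ)) :
    rotate x (Fin.last _) = -x 0 := by
  simp [rotate]

lemma rotate_zero (x : Fin (n + 2) → (Fin (n + 2) → ℤ)) : rotate x 0 = x 1 - x 0 :=
  rotate_of_lt x (i := 0) (by omega)

lemma IsLatBasis.rotate {x : Fin (n + 2) → (Fin (n + 2) → ℤ)} (hx : IsLatBasis x) :
    IsLatBasis (rotate x) := by
  have h₀ : x 0 ∈ Submodule.span ℤ (Set.range (_root_.rotate x)) := by
    rw [← neg_neg (x 0), ← rotate_last]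
    exact neg_mem (Submodule.subset_span ⟨_, rfl⟩)
  refine hx.of_mem_span fun i => ?_
  refine Fin.cases h₀ (fun i => ?_) i
  have := rotate_of_lt x (i := i) (by omega)
  rw [show i.succ = ⟨(i : ℕ) + 1, by omega⟩ from rfl, ← sub_add_cancel (x _) (x 0), ← this]
  exact add_mem (Submodule.subset_span ⟨_, rfl⟩) h₀

lemma diffs_rotate_rev (x : Fin (n + 2) → (Fin (n + 2) → ℤ)) :
    (fun i => diffs (fun j => rotate x (Fin.rev j)) (Fin.rev i)) = diffs (-x) := by
  ext1 i
  obtain ⟨i, hi⟩ := i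
  rcases i with _ | i
  · simp [diffs, Fin.rev, rotate]
    abel
  · have h₁ : n + 2 - (i + 1 + 1) + 1 < n + 2 := by omega
    have h₂ : n + 2 - (n + 2 - (i + 1 + 1) + 1 + 1) = i := by omega
    have h₃ : n + 2 - (n + 2 - (i + 1 + 1) + 1) = i + 1 := by omega
    simp only [diffs, Fin.rev, h₁, h₂, h₃, dif_pos, rotate, hi, Pi.neg_apply]
    split_ifs <;> abel

/-- The vector `(x_1−x_2, x_3−x_2, …, x_m−x_2, −x_2)`. -/
def fixedRotate (x : Fin (n + 2) → (Fin (n + 2) → ℤ)) : Fin (n + 2) → (Fin (n + 2) → ℤ) :=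
  fun i => if i = 0 then x 0 - x 1
    else if h : (i : ℕ) + 1 < n + 2 then x ⟨i + 1, h⟩ - x 1 else -x 1

lemma cycleRange_apply_mk (p i : ℕ) (hp : p < n + 2) (hi : i < n + 2) :
    Fin.cycleRange (⟨p, hp⟩ : Fin (n + 2)) ⟨i, hi⟩ =
      if h : i < p then ⟨i + 1, by omega⟩ else if i = p then 0 else ⟨i, hi⟩ := by
  split_ifs with h h'
  · ext
    rw [Fin.coe_cycleRange_of_lt (by simpa using h)]
  · subst h'
    exact Fin.cycleRange_self _
  · exact Fin.cycleRange_of_gt (by simp only [Fin.lt_def]; omega)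

lemma fixedRotate_cycleRange_castSucc (x : Fin (n + 2) → (Fin (n + 2) → ℤ)) (p : Fin (n + 1)) :
    (fun i => fixedRotate x (Fin.cycleRange p.castSucc i)) =
      rotate (fun i => x (Fin.cycleRange p.succ i)) := by
  obtain ⟨p, hp⟩ := p
  ext1 ⟨i, hi⟩
  have h₁ : Fin.cycleRange (⟨p + 1, by omega⟩ : Fin (n + 2)) 0 = 1 := by
    rw [show (0 : Fin (n + 2)) = ⟨0, by omega⟩ from rfl, cycleRange_apply_mk]
    simp
  simp only [Fin.castSucc_mk, Fin.succ_mk, rotate, h₁, cycleRange_apply_mk]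
  rcases lt_trichotomy i p with h | h | h
  · simp [fixedRotate, h, show i + 1 < n + 2 by omega, show i < n by omega]
  · subst h
    simp [fixedRotate, hp]
  · have h₂ : ¬ i < p := by omega
    have h₃ : i ≠ p := by omega
    have h₄ : i ≠ 0 := by omega
    simp [fixedRotate, h₂, h₃, h₄]

lemma fixedRotate_cycleRange_last (x : Fin (n + 2) → (Fin (n + 2) → ℤ)) :
    (fun i => fixedRotate x (Fin.cycleRange (Fin.last _) i)) = rotate (rotate x) := by
  ext1 ⟨i, hi⟩
  rw [show Fin.last (n + 1) = ⟨n + 1, by omega⟩ from rfl]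
  simp only [cycleRange_apply_mk]
  rcases Nat.lt_or_ge i (n + 1) with h | h
  · rw [rotate_of_lt _ (by omega), rotate_zero]
    simp [fixedRotate, rotate, h]
    split_ifs <;> abel
  · obtain rfl : i = n + 1 := by omega
    change _ = rotate (rotate x) (Fin.last _)
    rw [rotate_last, rotate_zero]
    simp [fixedRotate]

lemma IsLatBasis.fixedRotate {x : Fin (n + 2) → (Fin (n + 2) → ℤ)} (hx : IsLatBasis x) :
    IsLatBasis (fixedRotate x) := by
  have h := hx.rotate.rotate
  rw [← fixedRotate_cycleRange_last] at h
  simpa using h.comp_perm (Fin.cycleRange (Fin.last _)).symm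

lemma rotate_neg (x : Fin (n + 2) → (Fin (n + 2) → ℤ)) : rotate (-x) = -rotate x := by
  ext1 i
  simp only [rotate, Pi.neg_apply]
  split_ifs <;> abel

end Rotation

section Quotient

/-- The class of `[v_1,…,v_m]` modulo the double shuffle subgroup. -/
def shuffleClass {m : ℕ} (v : Fin m → (Fin m → ℤ)) :
    FreeAbelianGroup (Fin m → (Fin m → ℤ)) ⧸ doubleShuffleSubgroup m :=
  QuotientAddGroup.mk' _ (FreeAbelianGroup.of v)

variable {m : ℕ}

lemma sum_shuffleClass {v : Fin m → (Fin m → ℤ)} (hv : IsLatBasis v) {k : ℕ} (h₁ : 1 ≤ k)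
    (h₂ : k ≤ m - 1) : ∑ σ ∈ shuffles m k, shuffleClass (fun i => v (σ i)) = 0 := by
  simp only [shuffleClass, ← map_sum]
  exact (QuotientAddGroup.eq_zero_iff _).mpr
    (AddSubgroup.subset_closure ⟨v, k, hv, h₁, h₂, Or.inl rfl⟩)

lemma sum_shuffleClass_diffs {v : Fin m → (Fin m → ℤ)} (hv : IsLatBasis v) {k : ℕ} (h₁ : 1 ≤ k)
    (h₂ : k ≤ m - 1) : ∑ σ ∈ shuffles m k, shuffleClass (diffs fun i => v (σ i)) = 0 := by
  simp only [shuffleClass, ← map_sum]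
  exact (QuotientAddGroup.eq_zero_iff _).mpr
    (AddSubgroup.subset_closure ⟨v, k, hv, h₁, h₂, Or.inr rfl⟩)

lemma shuffleClass_rev (hm : 1 ≤ m) {v : Fin m → (Fin m → ℤ)} (hv : IsLatBasis v) :
    shuffleClass v = (-1 : ℤ) ^ (m + 1) • shuffleClass fun i => v (Fin.rev i) :=
  eq_revPerm_of_shuffle hm (fun σ => shuffleClass fun i => v (σ i))
    fun ρ _ h₁ h₂ => sum_shuffleClass (hv.comp_perm ρ) h₁ h₂

lemma shuffleClass_diffs_rev (hm : 1 ≤ m) {v : Fin m → (Fin m → ℤ)} (hv : IsLatBasis v) :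
    shuffleClass (diffs v) =
      (-1 : ℤ) ^ (m + 1) • shuffleClass (diffs fun i => v (Fin.rev i)) :=
  eq_revPerm_of_shuffle hm (fun σ => shuffleClass (diffs fun i => v (σ i)))
    fun ρ _ h₁ h₂ => sum_shuffleClass_diffs (hv.comp_perm ρ) h₁ h₂

variable {n : ℕ} {x : Fin (n + 2) → (Fin (n + 2) → ℤ)}

/-- Combining both reversals gives cyclic symmetry up to inversion. -/
lemma shuffleClass_diffs_rotate (hx : IsLatBasis x) :
    shuffleClass (diffs (rotate x)) = shuffleClass (diffs (-x)) := by
  have hrev : IsLatBasis fun i => rotate x (Fin.rev i) := hx.rotate.comp_perm Fin.revPerm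
  rw [shuffleClass_diffs_rev (by omega) hx.rotate, shuffleClass_rev (by omega) hrev.diffs,
    smul_smul, ← pow_add, Even.neg_one_pow ⟨_, rfl⟩, one_smul]
  exact congrArg shuffleClass (diffs_rotate_rev x)

lemma shuffleClass_diffs_neg (hx : IsLatBasis x) :
    shuffleClass (diffs (-x)) = shuffleClass (diffs x) := by
  have h₁ := sum_shuffleClass_diffs hx le_rfl (by omega)
  have h₂ := sum_shuffleClass_diffs hx.neg.fixedRotate le_rfl (by omega)
  rw [sum_shuffles_one fun σ => shuffleClass (diffs fun i => x (σ i)), Fin.sum_univ_succ] at h₁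
  rw [sum_shuffles_one fun σ => shuffleClass (diffs fun i => fixedRotate (-x) (σ i)),
    Fin.sum_univ_castSucc] at h₂
  have h₃ : ∀ p : Fin (n + 1),
      shuffleClass (diffs fun i => fixedRotate (-x) (Fin.cycleRange p.castSucc i)) =
        shuffleClass (diffs fun i => x (Fin.cycleRange p.succ i)) := fun p => by
    rw [fixedRotate_cycleRange_castSucc, shuffleClass_diffs_rotate (hx.neg.comp_perm _)]
    congr 2
    ext1 i
    simp
  have h₄ : shuffleClass (diffs fun i => fixedRotate (-x) (Fin.cycleRange (Fin.last _) i)) =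
      shuffleClass (diffs (-x)) := by
    rw [fixedRotate_cycleRange_last, shuffleClass_diffs_rotate hx.neg.rotate, rotate_neg, neg_neg,
      shuffleClass_diffs_rotate hx]
  simp only [h₃, h₄] at h₂
  simp only [Fin.cycleRange_zero, Equiv.Perm.one_apply] at h₁
  exact add_right_cancel (((add_comm _ _).trans h₂).trans h₁.symm)

end Quotient

end DihedralSymmetry

/-- Dihedral symmetry relations modulo the double shuffle relations:
(i) cyclic symmetry `[v_1,…,v_m] ≡ [v_2,…,v_m,v_0]`;
(ii) reversal `[v_1,…,v_m] ≡ (−1)^{m+1}[v_{m−1},…,v_1,v_0]`;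
(iii) inversion `[v_1,…,v_m] ≡ [−v_1,…,−v_m]`, where `v_0 = −(v_1+⋯+v_m)`. -/
theorem stmt2 (m : ℕ) (hm : 2 ≤ m) (v : Fin m → (Fin m → ℤ)) (hv : IsLatBasis v)
    (v₀ : Fin m → ℤ) (hv₀ : v₀ = - ∑ i, v i)
    (cyc : Fin m → (Fin m → ℤ))
    (hcyc : cyc = fun i : Fin m => if h : (i : ℕ) + 1 < m then v ⟨(i : ℕ) + 1, h⟩ else v₀)
    (rev : Fin m → (Fin m → ℤ))
    (hrev : rev = fun i : Fin m => if h : (i : ℕ) + 1 < m then v ⟨m - 2 - (i : ℕ), by omega⟩ else v₀) :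
    FreeAbelianGroup.of v - FreeAbelianGroup.of cyc ∈ doubleShuffleSubgroup m ∧
    FreeAbelianGroup.of v - ((-1 : ℤ) ^ (m + 1)) • FreeAbelianGroup.of rev ∈
      doubleShuffleSubgroup m ∧
    FreeAbelianGroup.of v - FreeAbelianGroup.of (fun i => - v i) ∈
      doubleShuffleSubgroup m := by
  obtain ⟨n, rfl⟩ : ∃ n, m = n + 2 := ⟨m - 2, by omega⟩
  obtain ⟨x, hxv, hx₀⟩ : ∃ x, diffs x = v ∧ x 0 = v₀ :=
    ⟨negTailSum v, diffs_negTailSum v, by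
      rw [hv₀, negTailSum, ← bot_eq_zero, Finset.Ici_bot]⟩
  have hx : IsLatBasis x := (hxv ▸ hv).of_diffs
  have hcyc' : cyc = diffs (rotate x) := by
    rw [hcyc, ← hxv, ← hx₀]
    ext1 i
    simp only [diffs, rotate]
    split_ifs <;> abel
  have hrev' : rev = diffs (-fun i => x (Fin.rev i)) := by
    rw [hrev, ← hxv, ← hx₀]
    ext1 i
    simp only [diffs, Pi.neg_apply, Fin.rev]
    split_ifs with h h'
    · have h₁ : n + 2 - 2 - (i : ℕ) + 1 = n + 2 - (i + 1) := by omega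
      have h₂ : n + 2 - 2 - (i : ℕ) = n + 2 - (i + 1 + 1) := by omega
      simp only [h₁]
      simp only [h₂]
      abel
    · omega
    · simp [show n + 2 - ((i : ℕ) + 1) = 0 by omega]
  have hneg : (fun i => -v i) = diffs (-x) := by
    rw [diffs_neg, hxv]
    rfl
  have hinv := shuffleClass_diffs_neg hx
  have toMem : ∀ a b : FreeAbelianGroup (Fin (n + 2) → (Fin (n + 2) → ℤ)),
      QuotientAddGroup.mk' (doubleShuffleSubgroup (n + 2)) a = QuotientAddGroup.mk' _ b →
        a - b ∈ doubleShuffleSubgroup (n + 2) := fun a b h => by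
    rw [← QuotientAddGroup.eq_zero_iff]
    exact (map_sub (QuotientAddGroup.mk' _) a b).trans (sub_eq_zero.mpr h)
  refine ⟨toMem _ _ ?_, toMem _ _ ?_, toMem _ _ ?_⟩
  · rw [hcyc', ← hxv]
    exact ((shuffleClass_diffs_rotate hx).trans hinv).symm
  · rw [hrev', ← hxv, map_zsmul]
    refine (shuffleClass_diffs_rev (by omega) hx).trans (congrArg _ ?_)
    exact (shuffleClass_diffs_neg (hx.comp_perm Fin.revPerm)).symm
  · rw [hneg, ← hxv]
    exact hinv.symm
end

section
/- Let w ≥ 2 be an integer. (a) If w is odd then V_{w,2} = S_{w,2}; in particular every multiple zeta value ζ(a,b) with a+b = w, b ≥ 2, is a ℚ-linear combination of monomials of weight < w, monomials of depth ≤ 1, and products of two monomials of positive weight with total weight ≤ w and total depth ≤ 2. (b) If w is even then dim_ℚ (V_{w,2}/S_{w,2}) ≤ ⌊(w−2)/6⌋. -/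
/-- The multiple zeta value `ζ(n_1,…,n_p) = Σ_{0<k_1<⋯<k_p} 1/(k_1^{n_1}⋯k_p^{n_p})`. -/
noncomputable def mzv (p : ℕ) (n : Fin p → ℕ) : ℝ :=
  ∑' k : {k : Fin p → ℕ // StrictMono k ∧ ∀ i, 0 < k i},
    ∏ i, (((k.1 i : ℝ)) ^ (n i))⁻¹

/-- An index (composition) `(n_1,…,n_{p+1})` for a multiple zeta value. -/
abbrev MZIndex : Type := (p : ℕ) × (Fin (p + 1) → ℕ)

/-- Admissibility: all `n_i ≥ 1` and the last entry is `≥ 2`. -/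
def MZIndex.Admissible (z : MZIndex) : Prop :=
  (∀ i, 1 ≤ z.2 i) ∧ 2 ≤ z.2 (Fin.last z.1)

/-- The weight `n_1 + ⋯ + n_{p+1}` of an index. -/
def MZIndex.weight (z : MZIndex) : ℕ := ∑ i, z.2 i

/-- The depth `p + 1` of an index. -/
def MZIndex.depth (z : MZIndex) : ℕ := z.1 + 1

/-- `x` is a monomial of weight `w'` and depth `m'`: `x = π^{2a}·ζ(s⁽¹⁾)⋯ζ(s⁽ᵏ⁾)` with
admissible indices `s⁽ⁱ⁾`, `w' = 2a + Σ weights`, `m' = Σ depths`. -/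
def IsMonomial (x : ℝ) (w' m' : ℕ) : Prop :=
  ∃ (a : ℕ) (zs : List MZIndex), (∀ z ∈ zs, z.Admissible) ∧
    x = Real.pi ^ (2 * a) * (zs.map fun z => mzv (z.1 + 1) z.2).prod ∧
    w' = 2 * a + (zs.map MZIndex.weight).sum ∧
    m' = (zs.map MZIndex.depth).sum

/-- `V_{w,m}`: the ℚ-span of all monomials of weight `≤ w` and depth `≤ m`. -/
noncomputable def Vspan (w m : ℕ) : Submodule ℚ ℝ :=
  Submodule.span ℚ {x | ∃ w' m', w' ≤ w ∧ m' ≤ m ∧ IsMonomial x w' m'}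

/-- `S_{w,m} = V_{w−1,m} + V_{w,m−1} + Σ V_{w₁,m₁}·V_{w₂,m₂}` (sum over `w₁,w₂ ≥ 1`,
`w₁+w₂ ≤ w`, `m₁+m₂ ≤ m`). -/
noncomputable def Sspan (w m : ℕ) : Submodule ℚ ℝ :=
  Vspan (w - 1) m ⊔ Vspan w (m - 1) ⊔
    ⨆ (w₁ : ℕ) (w₂ : ℕ) (m₁ : ℕ) (m₂ : ℕ) (_ : 1 ≤ w₁) (_ : 1 ≤ w₂)
      (_ : w₁ + w₂ ≤ w) (_ : m₁ + m₂ ≤ m),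
      Submodule.span ℚ {x | ∃ y ∈ Vspan w₁ m₁, ∃ z ∈ Vspan w₂ m₂, x = y * z}

open Finset Polynomial

/-- The binary form `∑ c_i x^i y^j` over `i + j = k`. -/
def binaryForm (k : ℕ) (c : ℕ → ℚ) (x y : ℚ) : ℚ :=
  ∑ p ∈ antidiagonal k, c p.1 * x ^ p.1 * y ^ p.2

lemma binaryForm_add_left (k : ℕ) (c : ℕ → ℚ) (x y : ℚ) :
    binaryForm k c (x + y) y =
      ∑ q ∈ antidiagonal k, (∑ p ∈ antidiagonal k, (p.1.choose q.1 : ℚ) * c p.1) *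
        (x ^ q.1 * y ^ q.2) := by
  simp only [binaryForm, Finset.sum_mul]
  rw [Finset.sum_comm]
  refine Finset.sum_congr rfl fun p hp => ?_
  rw [HasAntidiagonal.mem_antidiagonal] at hp
  rw [Finset.Nat.sum_antidiagonal_eq_sum_range_succ_mk, add_pow, Finset.mul_sum, Finset.sum_mul]
  have hsub : range (p.1 + 1) ⊆ range (k + 1) := range_subset_range.2 (by omega)
  rw [← Finset.sum_subset hsub]
  · refine Finset.sum_congr rfl fun i hi => ?_
    have hi' : i ≤ p.1 := by simpa [Nat.lt_succ_iff] using hi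
    have : k - i = (p.1 - i) + p.2 := by omega
    simp only [this, pow_add]
    ring
  · intro i _ hi
    have hi' : p.1 < i := by simpa [Nat.lt_succ_iff] using hi
    simp [Nat.choose_eq_zero_of_lt hi']

lemma binaryForm_swap {k : ℕ} {c : ℕ → ℚ} (hc : ∀ i j, i + j = k → c i = -c j) (x y : ℚ) :
    binaryForm k c y x = -binaryForm k c x y := by
  unfold binaryForm
  rw [← Finset.Nat.sum_antidiagonal_swap, ← Finset.sum_neg_distrib]
  refine Finset.sum_congr rfl fun p hp => ?_
  rw [HasAntidiagonal.mem_antidiagonal] at hp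
  simp only [Prod.fst_swap, Prod.snd_swap]
  rw [hc p.1 p.2 hp]
  ring

lemma binaryForm_shuffle {k : ℕ} {c : ℕ → ℚ}
    (hs : ∀ a b, a + b = k →
      ∑ p ∈ antidiagonal k, ((p.1.choose a : ℚ) + p.1.choose b) * c p.1 = 0) (x y : ℚ) :
    binaryForm k c x (x - y) = -binaryForm k c x y := by
  have h1 := binaryForm_add_left k c (x - y) y
  have h2 := binaryForm_add_left k c y (x - y)
  rw [← Finset.Nat.sum_antidiagonal_swap] at h2
  rw [sub_add_cancel] at h1
  rw [add_sub_cancel] at h2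
  rw [eq_neg_iff_add_eq_zero, h1, h2, ← Finset.sum_add_distrib]
  refine Finset.sum_eq_zero fun q hq => ?_
  rw [HasAntidiagonal.mem_antidiagonal] at hq
  have := hs q.1 q.2 hq
  simp only [add_mul, Finset.sum_add_distrib] at this
  simp only [Prod.fst_swap, Prod.snd_swap]
  linear_combination ((x - y) ^ q.1 * y ^ q.2) * this

lemma binaryForm_neg (k : ℕ) (c : ℕ → ℚ) (x y : ℚ) :
    binaryForm k c (-x) (-y) = (-1) ^ k * binaryForm k c x y := by
  unfold binaryForm
  rw [Finset.mul_sum]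
  refine Finset.sum_congr rfl fun p hp => ?_
  rw [HasAntidiagonal.mem_antidiagonal] at hp
  rw [neg_pow x, neg_pow y, ← hp, pow_add]
  ring

/-- The dehomogenisation `∑ c_i X^i` of `binaryForm k c`. -/
noncomputable def dehomogenization (k : ℕ) (c : ℕ → ℚ) : ℚ[X] :=
  ∑ p ∈ antidiagonal k, C (c p.1) * X ^ p.1

lemma coeff_dehomogenization {k : ℕ} (c : ℕ → ℚ) {i : ℕ} (hi : i ≤ k) :
    (dehomogenization k c).coeff i = c i := by
  unfold dehomogenization
  rw [Finset.Nat.sum_antidiagonal_eq_sum_range_succ_mk, finsetSum_coeff]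
  simp only [coeff_C_mul, coeff_X_pow]
  simp
  omega

lemma eval_dehomogenization (k : ℕ) (c : ℕ → ℚ) (x : ℚ) :
    (dehomogenization k c).eval x = binaryForm k c x 1 := by
  simp [dehomogenization, binaryForm, eval_finsetSum]

lemma coeff_eq_zero_of_odd {k : ℕ} (hk : Odd k) {c : ℕ → ℚ}
    (hc : ∀ i j, i + j = k → c i = -c j)
    (hs : ∀ a b, a + b = k →
      ∑ p ∈ antidiagonal k, ((p.1.choose a : ℚ) + p.1.choose b) * c p.1 = 0)
    {i : ℕ} (hi : i ≤ k) : c i = 0 := by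
  have h0 : dehomogenization k c = 0 := by
    refine Polynomial.funext fun x => ?_
    rw [eval_dehomogenization, eval_zero]
    have rot : ∀ x y, binaryForm k c (x - y) x = binaryForm k c x y := fun x y => by
      rw [binaryForm_swap hc, binaryForm_shuffle hs, neg_neg]
    have h1 := rot x 1
    rw [← rot (x - 1) x, ← rot (x - 1 - x) (x - 1)] at h1
    have h2 := binaryForm_neg k c x 1
    rw [hk.neg_one_pow] at h2
    have e1 : x - 1 - x - (x - 1) = -x := by ring
    have e2 : x - 1 - x = -1 := by ring
    rw [e1, e2] at h1
    linarith
  rw [← coeff_dehomogenization c hi, h0, coeff_zero]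

lemma coeff_eq_zero_of_even {k m : ℕ} (hk : Even k) (hm : k < 6 * m + 6) {c : ℕ → ℚ}
    (hc : ∀ i j, i + j = k → c i = -c j)
    (hs : ∀ a b, a + b = k →
      ∑ p ∈ antidiagonal k, ((p.1.choose a : ℚ) + p.1.choose b) * c p.1 = 0)
    (hz : ∀ i < m, c (2 * i + 1) = 0) {i : ℕ} (hi : i ≤ k) : c i = 0 := by
  by_contra hne
  have hex : ∃ n, n ≤ k ∧ c n ≠ 0 := ⟨i, hi, hne⟩
  classical
  obtain ⟨hnk, hcn⟩ := Nat.find_spec hex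
  have hmin : ∀ j, j < Nat.find hex → j ≤ k → c j = 0 := fun j hj hjk => by
    by_contra h
    exact Nat.find_min hex hj ⟨hjk, h⟩
  generalize Nat.find hex = n at hnk hcn hmin
  set P := dehomogenization k c with hP
  have hP0 : P ≠ 0 := fun h => hcn (by rw [← coeff_dehomogenization c hnk, ← hP, h, coeff_zero])
  have rot : ∀ x y, binaryForm k c (x - y) x = binaryForm k c x y := fun x y => by
    rw [binaryForm_swap hc, binaryForm_shuffle hs, neg_neg]
  -- the vanishing order along `x = 0` is odd
  have hodd : Odd n := by
    have hrefl : ∀ x, binaryForm k c (-x) (1 - x) = -binaryForm k c x 1 := fun x => by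
      rw [binaryForm_swap hc, ← rot, sub_neg_eq_add, sub_add_cancel, ← rot, sub_sub_cancel]
    let q : ℚ[X] := ∑ p ∈ antidiagonal k, C (c p.1) * X ^ (p.1 - n)
    let r : ℚ[X] := ∑ p ∈ antidiagonal k, C (c p.1) * (-X) ^ (p.1 - n) * (1 - X) ^ p.2
    have heq : (X : ℚ[X]) ^ n * ((-1) ^ n * r + q) = 0 := by
      refine Polynomial.funext fun x => ?_
      have := hrefl x
      rw [eq_neg_iff_add_eq_zero] at this
      rw [eval_zero, ← this]
      simp only [q, r, binaryForm, eval_mul, eval_add, eval_finsetSum, eval_pow, eval_X, eval_C,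
        eval_neg, eval_one, eval_sub, mul_add, Finset.mul_sum]
      congr 1 <;> refine Finset.sum_congr rfl fun p hp => ?_
      all_goals
        rw [HasAntidiagonal.mem_antidiagonal] at hp
        rcases lt_or_ge p.1 n with h | h
        · simp [hmin p.1 h (by omega)]
        · obtain ⟨d, hd⟩ := Nat.exists_eq_add_of_le h
          simp only [hd, Nat.add_sub_cancel_left, neg_pow x, pow_add]
          ring
    have h0 : (-1) ^ n * r + q = 0 := (mul_eq_zero.1 heq).resolve_left (pow_ne_zero _ X_ne_zero)
    have hsum : ∀ g : ℕ × ℕ → ℚ, (∀ p ∈ antidiagonal k, p.1 ≠ n → g p = 0) →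
        ∑ p ∈ antidiagonal k, g p = g (n, k - n) := fun g hg => by
      refine Finset.sum_eq_single (n, k - n) (fun p hp hpn => hg p hp fun h => hpn ?_) fun h => ?_
      · rw [HasAntidiagonal.mem_antidiagonal] at hp
        exact Prod.ext h (by simp; omega)
      · exact absurd (HasAntidiagonal.mem_antidiagonal.2 (by simp; omega)) h
    have hvan : ∀ p ∈ antidiagonal k, p.1 ≠ n → c p.1 = 0 ∨ p.1 - n ≠ 0 := fun p hp hpn => by
      rw [HasAntidiagonal.mem_antidiagonal] at hp
      rcases lt_or_ge p.1 n with h | h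
      · exact Or.inl (hmin p.1 h (by omega))
      · exact Or.inr (by omega)
    have hq : q.eval 0 = c n := by
      simp only [q, eval_finsetSum, eval_mul, eval_pow, eval_X, eval_C]
      rw [hsum]
      · simp
      · intro p hp hpn
        rcases hvan p hp hpn with h | h <;> simp [h]
    have hr : r.eval 0 = c n := by
      simp only [r, eval_finsetSum, eval_mul, eval_pow, eval_X, eval_C, eval_neg, eval_sub,
        eval_one]
      rw [hsum]
      · simp
      · intro p hp hpn
        rcases hvan p hp hpn with h | h <;> simp [h]
    by_contra hev
    rw [Nat.not_odd_iff_even] at hev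
    have := congrArg (eval 0) h0
    rw [hev.neg_one_pow, one_mul, eval_add, hq, hr, eval_zero] at this
    exact hcn (by linarith)
  have hn : 2 * m + 1 ≤ n := by
    by_contra h
    obtain ⟨j, rfl⟩ := hodd
    exact hcn (hz j (by omega))
  have hd0 : (X : ℚ[X]) ^ n ∣ P := Finset.dvd_sum fun p hp => by
    rw [HasAntidiagonal.mem_antidiagonal] at hp
    rcases lt_or_ge p.1 n with h | h
    · simp [hmin p.1 h (by omega)]
    · exact (pow_dvd_pow _ h).mul_left _
  have hd1 : (X - C 1 : ℚ[X]) ^ n ∣ P := by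
    have : P = ∑ p ∈ antidiagonal k, C (c p.1) * (X - C 1) ^ p.1 * X ^ p.2 := by
      refine Polynomial.funext fun x => ?_
      rw [eval_dehomogenization, ← rot]
      simp [binaryForm, eval_finsetSum]
    rw [this]
    refine Finset.dvd_sum fun p hp => ?_
    rw [HasAntidiagonal.mem_antidiagonal] at hp
    rcases lt_or_ge p.1 n with h | h
    · simp [hmin p.1 h (by omega)]
    · exact ((pow_dvd_pow _ h).mul_left _).mul_right _
  have f21 : binaryForm k c 2 1 = 0 := by
    have := binaryForm_shuffle hs 2 1
    norm_num at this
    linarith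
  have hd2 : (X - C 2 : ℚ[X]) ∣ P := by
    rw [dvd_iff_isRoot, IsRoot.def, eval_dehomogenization, f21]
  have hd3 : (X - C (-1) : ℚ[X]) ∣ P := by
    rw [dvd_iff_isRoot, IsRoot.def, eval_dehomogenization]
    have h1 := binaryForm_neg k c (-1) 1
    rw [hk.neg_one_pow, one_mul, neg_neg, binaryForm_swap hc] at h1
    linarith
  have hd4 : (X - C (1 / 2) : ℚ[X]) ∣ P := by
    rw [dvd_iff_isRoot, IsRoot.def, eval_dehomogenization, binaryForm_swap hc]
    have := binaryForm_shuffle hs 1 (1 / 2)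
    norm_num at this ⊢
    linarith
  have hdeg : P.natDegree ≤ k - n := by
    refine natDegree_sum_le_of_forall_le _ _ fun p hp => ?_
    rw [HasAntidiagonal.mem_antidiagonal] at hp
    rcases lt_or_ge p.2 n with h | h
    · simp [hc p.1 p.2 hp, hmin p.2 h (by omega)]
    · exact (natDegree_C_mul_X_pow_le _ _).trans (by omega)
  have cop : ∀ {a b : ℚ}, a ≠ b → IsCoprime (X - C a) (X - C b) := fun h =>
    isCoprime_X_sub_C_of_isUnit_sub (sub_ne_zero.2 h).isUnit
  have hX : (X : ℚ[X]) = X - C 0 := by simp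
  rw [hX] at hd0
  have hdvd : (X - C 0 : ℚ[X]) ^ n * ((X - C 1) ^ n *
      ((X - C 2) * ((X - C (-1)) * (X - C (1 / 2))))) ∣ P := by
    refine IsCoprime.mul_dvd ?_ hd0 (IsCoprime.mul_dvd ?_ hd1 (IsCoprime.mul_dvd ?_ hd2
      (IsCoprime.mul_dvd (cop (by norm_num)) hd3 hd4)))
    · refine IsCoprime.pow_left (IsCoprime.mul_right (IsCoprime.pow_right (cop (by norm_num)))
        (IsCoprime.mul_right (cop (by norm_num)) (IsCoprime.mul_right (cop (by norm_num))
          (cop (by norm_num)))))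
    · refine IsCoprime.pow_left (IsCoprime.mul_right (cop (by norm_num))
        (IsCoprime.mul_right (cop (by norm_num)) (cop (by norm_num))))
    · exact IsCoprime.mul_right (cop (by norm_num)) (cop (by norm_num))
  have hle := natDegree_le_of_dvd hdvd hP0
  have hmon : ∀ a : ℚ, (X - C a) ≠ 0 := X_sub_C_ne_zero
  rw [natDegree_mul, natDegree_mul, natDegree_mul, natDegree_mul] at hle
  · simp only [natDegree_pow, natDegree_X_sub_C] at hle
    omega
  all_goals
    simp only [ne_eq, mul_eq_zero, pow_eq_zero_iff', hmon, false_and, or_self, not_false_eq_true]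

lemma mem_span_of_double_shuffle {M : Type*} [AddCommGroup M] [Module ℚ M] {k m : ℕ}
    (hk : Even k) (hm : k < 6 * m + 6) {z : ℕ → M} (hc : ∀ i j, i + j = k → z i = -z j)
    (hs : ∀ a b, a + b = k →
      ∑ p ∈ antidiagonal k, ((p.1.choose a : ℚ) + p.1.choose b) • z p.1 = 0)
    {i : ℕ} (hi : i ≤ k) :
    z i ∈ Submodule.span ℚ (Set.range fun j : Fin m => z (2 * j + 1)) := by
  by_contra h
  obtain ⟨f, hf, hker⟩ := Submodule.exists_le_ker_of_notMem h
  refine hf (coeff_eq_zero_of_even hk hm (c := fun i => f (z i)) ?_ ?_ ?_ hi)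
  · intro i j hij
    rw [hc i j hij, map_neg]
  · intro a b hab
    simpa using congrArg f (hs a b hab)
  · intro j hj
    exact hker (Submodule.subset_span ⟨⟨j, hj⟩, rfl⟩)

lemma eq_zero_of_double_shuffle {M : Type*} [AddCommGroup M] [Module ℚ M] {k : ℕ}
    (hk : Odd k) {z : ℕ → M} (hc : ∀ i j, i + j = k → z i = -z j)
    (hs : ∀ a b, a + b = k →
      ∑ p ∈ antidiagonal k, ((p.1.choose a : ℚ) + p.1.choose b) • z p.1 = 0)
    {i : ℕ} (hi : i ≤ k) : z i = 0 := by
  by_contra h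
  rw [← Submodule.mem_bot ℚ] at h
  obtain ⟨f, hf, -⟩ := Submodule.exists_le_ker_of_notMem h
  refine hf (coeff_eq_zero_of_odd hk (c := fun i => f (z i)) ?_ ?_ hi)
  · intro i j hij
    rw [hc i j hij, map_neg]
  · intro a b hab
    simpa using congrArg f (hs a b hab)


/-- One half of the partial fraction expansion of `x^(a+1) y^(k-a+1)` in terms of `u`, where
`x y = u (x + y)`. -/
def shuffleSum (u y : ℝ) (k a : ℕ) : ℝ :=
  ∑ p ∈ antidiagonal k, (p.1.choose a : ℝ) * (u ^ (p.1 + 1) * y ^ (p.2 + 1))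

lemma shuffleSum_succ_succ (u y : ℝ) (k a : ℕ) :
    shuffleSum u y (k + 1) (a + 1) = u * (shuffleSum u y k a + shuffleSum u y k (a + 1)) := by
  unfold shuffleSum
  rw [Finset.Nat.sum_antidiagonal_succ, ← Finset.sum_add_distrib, Finset.mul_sum]
  simp only [Nat.choose_zero_succ, Nat.cast_zero, zero_mul, zero_add]
  refine Finset.sum_congr rfl fun p _ => ?_
  rw [Nat.choose_succ_succ]
  push_cast
  ring

lemma shuffleSum_succ_zero (u y : ℝ) (k : ℕ) :
    shuffleSum u y (k + 1) 0 = u * (y ^ (k + 2) + shuffleSum u y k 0) := by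
  unfold shuffleSum
  rw [Finset.Nat.sum_antidiagonal_succ, mul_add, Finset.mul_sum]
  congr 1
  · simp
  · refine Finset.sum_congr rfl fun p _ => ?_
    simp only [Nat.choose_zero_right]
    ring

lemma shuffleSum_of_lt (u y : ℝ) {k a : ℕ} (h : k < a) : shuffleSum u y k a = 0 := by
  refine Finset.sum_eq_zero fun p hp => ?_
  rw [HasAntidiagonal.mem_antidiagonal] at hp
  rw [Nat.choose_eq_zero_of_lt (by omega), Nat.cast_zero, zero_mul]

lemma shuffleSum_self (u y : ℝ) (k : ℕ) : shuffleSum u y k k = u ^ (k + 1) * y := by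
  induction k with
  | zero => simp [shuffleSum]
  | succ k ih =>
    rw [shuffleSum_succ_succ, ih, shuffleSum_of_lt u y k.lt_succ_self]
    ring

lemma pow_mul_pow_zero_eq {x y u : ℝ} (h : x * y = u * (x + y)) (b : ℕ) :
    x * y ^ (b + 1) = shuffleSum u y b 0 + shuffleSum u x b b := by
  rw [shuffleSum_self]
  induction b with
  | zero => simp [shuffleSum]; linear_combination h
  | succ b ih =>
    rw [shuffleSum_succ_zero]
    linear_combination y ^ (b + 1) * h + u * ih

lemma partial_fraction {x y u : ℝ} (h : x * y = u * (x + y)) (a b : ℕ) {k : ℕ}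
    (hk : k = a + b) :
    x ^ (a + 1) * y ^ (b + 1) = shuffleSum u y k a + shuffleSum u x k b := by
  induction a generalizing b k with
  | zero =>
    obtain rfl : k = b := by omega
    simpa using pow_mul_pow_zero_eq h k
  | succ a iha =>
    induction b generalizing k with
    | zero =>
      subst hk
      have := pow_mul_pow_zero_eq (x := y) (y := x) (u := u) (by linear_combination h) (a + 1)
      rw [add_zero]
      linear_combination this
    | succ b ihb =>
      obtain rfl : k = a + b + 1 + 1 := by omega
      have h1 := iha (b + 1) (k := a + b + 1) (by omega)
      have h2 := ihb (k := a + b + 1) (by omega)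
      rw [shuffleSum_succ_succ u y, shuffleSum_succ_succ u x]
      linear_combination u * h1 + u * h2 + x ^ (a + 1) * y ^ (b + 1) * h

/-- The double series `∑ 1 / (m^a (m+n)^b)` over positive integers `m`, `n`. -/
noncomputable def doubleTerm (a b : ℕ) (p : ℕ × ℕ) : ℝ :=
  (((p.1 : ℝ) + 1)⁻¹) ^ a * (((p.1 : ℝ) + p.2 + 2)⁻¹) ^ b

lemma summable_inv_pow {a : ℕ} (ha : 2 ≤ a) : Summable fun n : ℕ => (((n : ℝ) + 1)⁻¹) ^ a := by
  have := (summable_nat_add_iff 1).2 (Real.summable_nat_pow_inv.2 (show 1 < a by omega))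
  simpa using this

lemma summable_doubleTerm {a b : ℕ} (ha : 1 ≤ a) (hb : 2 ≤ b) : Summable (doubleTerm a b) := by
  have hs : Summable fun n : ℕ => ((n : ℝ) + 1) ^ (-(3 / 2) : ℝ) := by
    have := (summable_nat_add_iff 1).2 (Real.summable_nat_rpow.2 (show -(3 / 2 : ℝ) < -1 by norm_num))
    simpa using this
  refine Summable.of_nonneg_of_le (fun p => by unfold doubleTerm; positivity) (fun p => ?_)
    (hs.mul_of_nonneg hs (fun n => by positivity) (fun n => by positivity))
  unfold doubleTerm
  set x : ℝ := p.1 + 1 with hx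
  set y : ℝ := p.2 + 1 with hy
  have hx1 : 1 ≤ x := by simp [hx]
  have hy1 : 1 ≤ y := by simp [hy]
  have hxy : (p.1 : ℝ) + p.2 + 2 = x + y := by rw [hx, hy]; ring
  rw [hxy]
  have h1 : x⁻¹ ^ a ≤ x ^ (-1 : ℝ) := by
    rw [Real.rpow_neg_one]
    exact pow_le_of_le_one (by positivity) (inv_le_one_of_one_le₀ hx1) (by omega)
  have h2 : (x + y)⁻¹ ^ b ≤ x ^ (-(1 / 2) : ℝ) * y ^ (-(3 / 2) : ℝ) := by
    calc (x + y)⁻¹ ^ b ≤ (x + y)⁻¹ ^ 2 :=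
          pow_le_pow_of_le_one (by positivity) (inv_le_one_of_one_le₀ (by linarith)) hb
      _ = (x + y) ^ (-(1 / 2) : ℝ) * (x + y) ^ (-(3 / 2) : ℝ) := by
          rw [← Real.rpow_add (by positivity), inv_pow, ← Real.rpow_natCast,
            ← Real.rpow_neg (by positivity)]
          norm_num
      _ ≤ _ := by
          gcongr ?_ * ?_
          · exact Real.rpow_le_rpow_of_nonpos (by positivity) (by linarith) (by norm_num)
          · exact Real.rpow_le_rpow_of_nonpos (by positivity) (by linarith) (by norm_num)
  calc _ ≤ x ^ (-1 : ℝ) * (x ^ (-(1 / 2) : ℝ) * y ^ (-(3 / 2) : ℝ)) := by gcongr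
    _ = _ := by
      rw [← mul_assoc, ← Real.rpow_add (by positivity)]
      norm_num

/-- The single zeta series. -/
noncomputable def singleZeta (a : ℕ) : ℝ := ∑' n : ℕ, (((n : ℝ) + 1)⁻¹) ^ a

/-- The double zeta series. -/
noncomputable def doubleZeta (a b : ℕ) : ℝ := ∑' p : ℕ × ℕ, doubleTerm a b p

lemma hasSum_singleZeta {a : ℕ} (ha : 2 ≤ a) :
    HasSum (fun n : ℕ => (((n : ℝ) + 1)⁻¹) ^ a) (singleZeta a) :=
  (summable_inv_pow ha).hasSum

lemma hasSum_doubleZeta {a b : ℕ} (ha : 1 ≤ a) (hb : 2 ≤ b) :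
    HasSum (doubleTerm a b) (doubleZeta a b) :=
  (summable_doubleTerm ha hb).hasSum

lemma singleZeta_mul {a b : ℕ} (ha : 2 ≤ a) (hb : 2 ≤ b) :
    HasSum (fun p : ℕ × ℕ => (((p.1 : ℝ) + 1)⁻¹) ^ a * (((p.2 : ℝ) + 1)⁻¹) ^ b)
      (singleZeta a * singleZeta b) :=
  (hasSum_singleZeta ha).mul (hasSum_singleZeta hb)
    ((summable_inv_pow ha).mul_of_nonneg (summable_inv_pow hb)
      (fun n => by positivity) (fun n => by positivity))

lemma stuffle {a b : ℕ} (ha : 2 ≤ a) (hb : 2 ≤ b) :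
    singleZeta a * singleZeta b = doubleZeta a b + doubleZeta b a + singleZeta (a + b) := by
  have h := singleZeta_mul ha hb
  set F : ℕ × ℕ → ℝ := fun p => (((p.1 : ℝ) + 1)⁻¹) ^ a * (((p.2 : ℝ) + 1)⁻¹) ^ b with hF
  have hi1 : Function.Injective (fun p : ℕ × ℕ => (p.1, p.1 + p.2 + 1)) := by
    rintro ⟨m, n⟩ ⟨m', n'⟩ h
    simp only [Prod.mk.injEq] at h ⊢
    omega
  have hi2 : Function.Injective (fun p : ℕ × ℕ => (p.1 + p.2 + 1, p.1)) := by
    rintro ⟨m, n⟩ ⟨m', n'⟩ h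
    simp only [Prod.mk.injEq] at h ⊢
    omega
  have hi3 : Function.Injective (fun n : ℕ => (n, n)) := fun m n h => (Prod.mk.inj h).1
  have h1 : HasSum ({p : ℕ × ℕ | p.1 < p.2}.indicator F) (doubleZeta a b) := by
    rw [← hi1.hasSum_iff]
    · convert (hasSum_doubleZeta (by omega : 1 ≤ a) hb) using 1
      funext p
      simp [F, doubleTerm, Set.indicator, add_assoc]
      norm_num
    · rintro ⟨m, n⟩ hmn
      refine Set.indicator_of_notMem (fun hlt => hmn ⟨(m, n - m - 1), ?_⟩) _
      simp only [Set.mem_ofPred_eq] at hlt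
      simp only [Prod.mk.injEq, true_and]
      omega
  have h2 : HasSum ({p : ℕ × ℕ | p.2 < p.1}.indicator F) (doubleZeta b a) := by
    rw [← hi2.hasSum_iff]
    · convert (hasSum_doubleZeta (by omega : 1 ≤ b) ha) using 1
      funext p
      simp [F, doubleTerm, Set.indicator, add_assoc]
      norm_num [mul_comm]
    · rintro ⟨m, n⟩ hmn
      refine Set.indicator_of_notMem (fun hlt => hmn ⟨(n, m - n - 1), ?_⟩) _
      simp only [Set.mem_ofPred_eq] at hlt
      simp only [Prod.mk.injEq, and_true]
      omega
  have h3 : HasSum ({p : ℕ × ℕ | p.1 = p.2}.indicator F) (singleZeta (a + b)) := by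
    rw [← hi3.hasSum_iff]
    · convert (hasSum_singleZeta (by omega : 2 ≤ a + b)) using 1
      funext n
      simp [F, pow_add]
    · rintro ⟨m, n⟩ hmn
      refine Set.indicator_of_notMem (fun hlt => hmn ⟨m, ?_⟩) _
      simp only [Set.mem_ofPred_eq] at hlt
      simp [hlt]
  refine h.unique ?_
  convert (h1.add h2).add h3 using 1
  ext ⟨m, n⟩
  rcases lt_trichotomy m n with h | h | h
  · simp [Set.indicator, h, h.ne, not_lt.2 h.le]
  · simp [Set.indicator, h]
  · simp [Set.indicator, h, h.ne', not_lt.2 h.le]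

lemma inv_mul_inv_eq (p : ℕ × ℕ) :
    ((p.1 : ℝ) + 1)⁻¹ * ((p.2 : ℝ) + 1)⁻¹ =
      ((p.1 : ℝ) + p.2 + 2)⁻¹ * (((p.1 : ℝ) + 1)⁻¹ + ((p.2 : ℝ) + 1)⁻¹) := by
  have h1 : (p.1 : ℝ) + 1 ≠ 0 := by positivity
  have h2 : (p.2 : ℝ) + 1 ≠ 0 := by positivity
  have h3 : (p.1 : ℝ) + p.2 + 2 ≠ 0 := by positivity
  field_simp
  ring

lemma hasSum_swap_doubleTerm {a b : ℕ} (ha : 1 ≤ a) (hb : 2 ≤ b) :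
    HasSum (fun p : ℕ × ℕ => (((p.1 : ℝ) + p.2 + 2)⁻¹) ^ b * (((p.2 : ℝ) + 1)⁻¹) ^ a)
      (doubleZeta a b) := by
  have := (Equiv.prodComm ℕ ℕ).hasSum_iff.2 (hasSum_doubleZeta ha hb)
  convert this using 1
  funext p
  simp [doubleTerm]
  ring

lemma hasSum_doubleTerm {a b : ℕ} (ha : 1 ≤ a) (hb : 2 ≤ b) :
    HasSum (fun p : ℕ × ℕ => (((p.1 : ℝ) + p.2 + 2)⁻¹) ^ b * (((p.1 : ℝ) + 1)⁻¹) ^ a)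
      (doubleZeta a b) := by
  convert (hasSum_doubleZeta ha hb) using 1
  funext p
  simp only [doubleTerm]
  ring

lemma shuffle {a b : ℕ} (ha : 1 ≤ a) (hb : 1 ≤ b) :
    singleZeta (a + 1) * singleZeta (b + 1) =
      ∑ p ∈ antidiagonal (a + b),
        ((p.1.choose a : ℝ) + p.1.choose b) * doubleZeta (p.2 + 1) (p.1 + 1) := by
  have h := singleZeta_mul (by omega : 2 ≤ a + 1) (by omega : 2 ≤ b + 1)
  refine h.unique ?_
  simp only [add_mul, Finset.sum_add_distrib]
  have key : ∀ q : ℕ × ℕ, _ := fun q => partial_fraction (inv_mul_inv_eq q) a b rfl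
  rw [funext key]
  refine HasSum.add (hasSum_sum fun p hp => ?_) (hasSum_sum fun p hp => ?_)
  · rcases Nat.eq_zero_or_pos p.1 with h0 | h0
    · simp [h0, Nat.choose_eq_zero_of_lt ha]
    · exact (hasSum_swap_doubleTerm (by omega) (by omega)).mul_left _
  · rcases Nat.eq_zero_or_pos p.1 with h0 | h0
    · simp [h0, Nat.choose_eq_zero_of_lt hb]
    · exact (hasSum_doubleTerm (by omega) (by omega)).mul_left _

lemma hasSum_inv_sub_inv (m : ℕ) :
    HasSum (fun d : ℕ => ((d : ℝ) + 1)⁻¹ - ((d : ℝ) + 1 + m)⁻¹)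
      (∑ j ∈ range m, ((j : ℝ) + 1)⁻¹) := by
  induction m with
  | zero => simp
  | succ m ih =>
    have tel : HasSum (fun d : ℕ => ((d : ℝ) + 1 + m)⁻¹ - ((d : ℝ) + 1 + (m + 1))⁻¹)
        (((m : ℝ) + 1)⁻¹) := by
      rw [hasSum_iff_tendsto_nat_of_nonneg]
      · have h1 : ∀ n : ℕ, ∑ d ∈ range n, (((d : ℝ) + 1 + m)⁻¹ - ((d : ℝ) + 1 + (m + 1))⁻¹) =
            ((m : ℝ) + 1)⁻¹ - ((n : ℝ) + (1 + m))⁻¹ := fun n => by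
          have := Finset.sum_range_sub' (fun d : ℕ => ((d : ℝ) + 1 + m)⁻¹) n
          convert this using 2
          · push_cast; ring
          · push_cast; ring
          · ring
        simp only [h1]
        have : Filter.Tendsto (fun n : ℕ => ((n : ℝ) + (1 + m))⁻¹) Filter.atTop (nhds 0) :=
          tendsto_inv_atTop_zero.comp
            (Filter.tendsto_atTop_add_const_right _ _ tendsto_natCast_atTop_atTop)
        simpa using tendsto_const_nhds.sub this
      · intro d
        rw [sub_nonneg]
        gcongr
        linarith
    rw [Finset.sum_range_succ]
    convert ih.add tel using 1
    ext d
    push_cast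
    ring

/-- Euler's sum formula. -/
lemma sum_doubleZeta {k : ℕ} :
    ∑ p ∈ antidiagonal k, doubleZeta (p.2 + 1) (p.1 + 2) = singleZeta (k + 3) := by
  set G : ℕ × ℕ → ℝ := fun p =>
    (((p.1 : ℝ) + 1)⁻¹) ^ (k + 1) * (((p.2 : ℝ) + 1)⁻¹ * ((p.1 : ℝ) + p.2 + 2)⁻¹) with hG
  have hG1 : HasSum G ((∑ p ∈ antidiagonal k, doubleZeta (p.2 + 1) (p.1 + 2)) +
      doubleZeta 1 (k + 2)) := by
    have key : ∀ q : ℕ × ℕ, G q =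
        (∑ p ∈ antidiagonal k, (((q.1 : ℝ) + q.2 + 2)⁻¹) ^ (p.1 + 2) *
          (((q.1 : ℝ) + 1)⁻¹) ^ (p.2 + 1)) +
        (((q.1 : ℝ) + q.2 + 2)⁻¹) ^ (k + 2) * (((q.2 : ℝ) + 1)⁻¹) ^ 1 := fun q => by
      have := partial_fraction (inv_mul_inv_eq q) k 0 rfl
      rw [add_zero, shuffleSum_self] at this
      simp only [hG]
      calc _ = ((q.1 : ℝ) + q.2 + 2)⁻¹ *
            ((((q.1 : ℝ) + 1)⁻¹) ^ (k + 1) * (((q.2 : ℝ) + 1)⁻¹) ^ (0 + 1)) := by ring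
        _ = _ := by
          rw [this, shuffleSum, mul_add, Finset.mul_sum, add_comm]
          congr 1
          · refine Finset.sum_congr rfl fun p hp => ?_
            rw [Nat.choose_zero_right, Nat.cast_one]
            ring
          · ring
    rw [funext key]
    exact (hasSum_sum fun p hp => hasSum_doubleTerm (by omega) (by omega)).add
      (hasSum_swap_doubleTerm le_rfl (by omega))
  have hinner : ∀ m : ℕ, HasSum (fun d => G (m, d))
      ((((m : ℝ) + 1)⁻¹) ^ (k + 2) * ∑ j ∈ range (m + 1), ((j : ℝ) + 1)⁻¹) := fun m => by
    refine ((hasSum_inv_sub_inv (m + 1)).mul_left ((((m : ℝ) + 1)⁻¹) ^ (k + 2))).congr_fun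
      fun d => ?_
    have h1 : (m : ℝ) + 1 ≠ 0 := by positivity
    have h2 : (d : ℝ) + 1 ≠ 0 := by positivity
    have h3 : (m : ℝ) + d + 2 ≠ 0 := by positivity
    have h5 : (d : ℝ) + 1 + ((m : ℝ) + 1) = m + d + 2 := by ring
    have h6 : ((d : ℝ) + 1)⁻¹ * ((m : ℝ) + d + 2)⁻¹ =
        ((m : ℝ) + 1)⁻¹ * (((d : ℝ) + 1)⁻¹ - ((m : ℝ) + d + 2)⁻¹) := by
      field_simp
      ring
    simp only [hG]
    push_cast
    rw [h5, h6, pow_succ _ (k + 1), mul_assoc]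
  have hG2 := hG1.prod_fiberwise hinner
  -- regroup `ζ(1, k+2)` by the larger summation index
  have hZ : HasSum (fun n : ℕ => (((n : ℝ) + 2)⁻¹) ^ (k + 2) * ∑ j ∈ range (n + 1), ((j : ℝ) + 1)⁻¹)
      (doubleZeta 1 (k + 2)) := by
    have := (Finset.HasAntidiagonal.sigmaAntidiagonalEquivProd (A := ℕ)).hasSum_iff.2
      (hasSum_doubleTerm (le_refl 1) (by omega : 2 ≤ k + 2))
    refine this.sigma fun n => ?_
    convert hasSum_fintype _ using 1
    simp only [Function.comp_apply, HasAntidiagonal.sigmaAntidiagonalEquivProd_apply]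
    rw [Finset.mul_sum, Finset.univ_eq_attach, Finset.sum_attach (antidiagonal n)
      (fun p : ℕ × ℕ => (((p.1 : ℝ) + p.2 + 2)⁻¹) ^ (k + 2) * (((p.1 : ℝ) + 1)⁻¹) ^ 1),
      Finset.Nat.sum_antidiagonal_eq_sum_range_succ_mk]
    refine Finset.sum_congr rfl fun j hj => ?_
    have : j ≤ n := by simpa [Nat.lt_succ_iff] using hj
    rw [Nat.cast_sub this]
    simp
  have hZ' : HasSum (fun n : ℕ => (((n : ℝ) + 1)⁻¹) ^ (k + 2) * ∑ j ∈ range n, ((j : ℝ) + 1)⁻¹)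
      (doubleZeta 1 (k + 2)) := by
    rw [← hasSum_nat_add_iff' 1]
    simp only [range_one, sum_singleton, range_zero, sum_empty, mul_zero, sub_zero]
    refine hZ.congr_fun fun n => ?_
    push_cast
    rw [add_assoc (n : ℝ), one_add_one_eq_two]
  have hS := (hasSum_singleZeta (by omega : 2 ≤ k + 3))
  have := hG2.unique (by
    convert hS.add hZ' using 1
    funext n
    rw [Finset.sum_range_succ]
    ring)
  linarith

lemma mzv_one (n : Fin 1 → ℕ) : mzv 1 n = singleZeta (n 0) := by
  let e : ℕ ≃ {k : Fin 1 → ℕ // StrictMono k ∧ ∀ i, 0 < k i} :=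
    { toFun := fun m => ⟨fun _ => m + 1, Subsingleton.strictMono _, fun _ => m.succ_pos⟩
      invFun := fun k => k.1 0 - 1
      left_inv := fun m => by simp
      right_inv := fun k => by
        refine Subtype.ext (funext fun i => ?_)
        have := k.2.2 0
        rw [Subsingleton.elim i 0]
        simp only
        omega }
  unfold mzv singleZeta
  rw [← e.tsum_eq]
  simp [e]

lemma mzv_two (n : Fin 2 → ℕ) : mzv 2 n = doubleZeta (n 0) (n 1) := by
  let e : ℕ × ℕ ≃ {k : Fin 2 → ℕ // StrictMono k ∧ ∀ i, 0 < k i} :=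
    { toFun := fun p => ⟨![p.1 + 1, p.1 + p.2 + 2], by
        rw [Fin.strictMono_iff_lt_succ]
        simp [Fin.forall_fin_succ], by simp [Fin.forall_fin_succ]⟩
      invFun := fun k => (k.1 0 - 1, k.1 1 - k.1 0 - 1)
      left_inv := fun p => by
        ext
        · simp
        · simp
          omega
      right_inv := fun k => by
        have h0 := k.2.2 0
        have h1 : k.1 0 < k.1 1 := k.2.1 (by simp)
        refine Subtype.ext (funext fun i => ?_)
        fin_cases i
        · simp
          omega
        · simp
          omega }
  unfold mzv doubleZeta
  rw [← e.tsum_eq]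
  refine tsum_congr fun p => ?_
  simp [e, doubleTerm, Fin.prod_univ_two, mul_comm]

lemma isMonomial_pi (a : ℕ) : IsMonomial (Real.pi ^ (2 * a)) (2 * a) 0 :=
  ⟨a, [], by simp, by simp, by simp, by simp⟩

lemma isMonomial_mzv {z : MZIndex} (hz : z.Admissible) :
    IsMonomial (mzv (z.1 + 1) z.2) z.weight z.depth :=
  ⟨0, [z], by simpa using hz, by simp, by simp, by simp⟩

lemma IsMonomial.mem_Vspan {x : ℝ} {w' m' w m : ℕ} (hx : IsMonomial x w' m') (hw : w' ≤ w)
    (hm : m' ≤ m) : x ∈ Vspan w m :=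
  Submodule.subset_span ⟨w', m', hw, hm, hx⟩

lemma singleZeta_mem_Vspan {a : ℕ} (ha : 2 ≤ a) : singleZeta a ∈ Vspan a 1 := by
  have hz : MZIndex.Admissible ⟨0, fun _ => a⟩ := ⟨fun _ => by simp; omega, ha⟩
  have := (isMonomial_mzv hz).mem_Vspan (w := a) (m := 1) (by simp [MZIndex.weight]) le_rfl
  rwa [mzv_one] at this

lemma Vspan_weight_sub_one_le_Sspan (w m : ℕ) : Vspan (w - 1) m ≤ Sspan w m :=
  le_sup_left.trans le_sup_left

lemma Vspan_depth_sub_one_le_Sspan (w m : ℕ) : Vspan w (m - 1) ≤ Sspan w m :=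
  le_sup_right.trans le_sup_left

lemma mul_mem_Sspan {w m w₁ w₂ m₁ m₂ : ℕ} (h₁ : 1 ≤ w₁) (h₂ : 1 ≤ w₂) (hw : w₁ + w₂ ≤ w)
    (hm : m₁ + m₂ ≤ m) {x y : ℝ} (hx : x ∈ Vspan w₁ m₁) (hy : y ∈ Vspan w₂ m₂) :
    x * y ∈ Sspan w m := by
  refine (le_sup_right : _ ≤ Sspan w m) ?_
  refine Submodule.mem_iSup_of_mem w₁ <| Submodule.mem_iSup_of_mem w₂ <|
    Submodule.mem_iSup_of_mem m₁ <| Submodule.mem_iSup_of_mem m₂ <|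
    Submodule.mem_iSup_of_mem h₁ <| Submodule.mem_iSup_of_mem h₂ <|
    Submodule.mem_iSup_of_mem hw <| Submodule.mem_iSup_of_mem hm <|
    Submodule.subset_span ⟨x, hx, y, hy, rfl⟩

lemma Vspan_mono {w w' m m' : ℕ} (hw : w ≤ w') (hm : m ≤ m') : Vspan w m ≤ Vspan w' m' :=
  Submodule.span_mono fun _ ⟨a, b, ha, hb, h⟩ => ⟨a, b, ha.trans hw, hb.trans hm, h⟩

lemma IsMonomial.mul {x y : ℝ} {w m w' m' : ℕ} (hx : IsMonomial x w m) (hy : IsMonomial y w' m') :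
    IsMonomial (x * y) (w + w') (m + m') := by
  obtain ⟨a, l, hl, rfl, rfl, rfl⟩ := hx
  obtain ⟨b, l', hl', rfl, rfl, rfl⟩ := hy
  refine ⟨a + b, l ++ l', ?_, ?_, ?_, ?_⟩
  · intro z hz
    rcases List.mem_append.1 hz with h | h
    exacts [hl z h, hl' z h]
  · rw [List.map_append, List.prod_append, mul_add, pow_add]
    ring
  · rw [List.map_append, List.sum_append]
    ring
  · rw [List.map_append, List.sum_append]

lemma Vspan_mul_mem {w m w' m' : ℕ} {x y : ℝ} (hx : x ∈ Vspan w m) (hy : y ∈ Vspan w' m') :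
    x * y ∈ Vspan (w + w') (m + m') := by
  have : Vspan w m * Vspan w' m' ≤ Vspan (w + w') (m + m') := by
    unfold Vspan
    rw [Submodule.span_mul_span, Submodule.span_le]
    rintro _ ⟨x, ⟨a, b, ha, hb, hx⟩, y, ⟨a', b', ha', hb', hy⟩, rfl⟩
    exact (hx.mul hy).mem_Vspan (by omega) (by omega)
  exact this (Submodule.mul_mem_mul hx hy)

lemma Sspan_le_Vspan (w m : ℕ) : Sspan w m ≤ Vspan w m := by
  refine sup_le (sup_le (Vspan_mono (Nat.sub_le _ _) le_rfl) (Vspan_mono le_rfl (Nat.sub_le _ _))) ?_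
  simp only [iSup_le_iff]
  intro w₁ w₂ m₁ m₂ _ _ hw hm
  rw [Submodule.span_le]
  rintro _ ⟨y, hy, z, hz, rfl⟩
  exact Vspan_mono hw hm (Vspan_mul_mem hy hz)

lemma MZIndex.Admissible.two_le_weight {z : MZIndex} (hz : z.Admissible) : 2 ≤ z.weight :=
  hz.2.trans (Finset.single_le_sum (f := z.2) (fun _ _ => Nat.zero_le _) (Finset.mem_univ _))

lemma Vspan_two_le {w : ℕ} (hw : 1 ≤ w) {N : Submodule ℚ ℝ} (hS : Sspan w 2 ≤ N)
    (hN : ∀ a b, 1 ≤ a → 2 ≤ b → a + b = w → doubleZeta a b ∈ N) : Vspan w 2 ≤ N := by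
  unfold Vspan
  rw [Submodule.span_le]
  rintro x ⟨w', m', hw', hm', hx⟩
  rcases hw'.lt_or_eq with hlt | rfl
  · exact hS (Vspan_weight_sub_one_le_Sspan w 2 (hx.mem_Vspan (by omega) hm'))
  rcases hm'.lt_or_eq with hlt | rfl
  · exact hS (Vspan_depth_sub_one_le_Sspan w' 2 (hx.mem_Vspan le_rfl (by omega)))
  obtain ⟨a, l, hl, rfl, rfl, hd⟩ := hx
  match l, hl, hd with
  | [], _, hd => simp at hd
  | [z], hl, hd =>
    have hz := hl z (by simp)
    obtain ⟨p, n⟩ := z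
    obtain rfl : p = 1 := by simpa [MZIndex.depth] using hd.symm
    rcases Nat.eq_zero_or_pos a with rfl | ha
    · have h := hN (n 0) (n 1) (hz.1 0) hz.2 (by simp [MZIndex.weight, Fin.sum_univ_two])
      simpa [mzv_two] using h
    · have h1 := (isMonomial_pi a).mem_Vspan le_rfl le_rfl
      have h2 := (isMonomial_mzv hz).mem_Vspan le_rfl le_rfl
      have := hz.two_le_weight
      simpa using hS (mul_mem_Sspan (by omega) (by omega) (by simp)
        (by simp [MZIndex.depth]) h1 h2)
  | z₁ :: z₂ :: l, hl, hd =>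
    have hz := hl z₁ (by simp)
    have hz₂ := hl z₂ (by simp)
    have h1 := (isMonomial_mzv hz).mem_Vspan le_rfl le_rfl
    have h2 : IsMonomial (Real.pi ^ (2 * a) * ((z₂ :: l).map fun z => mzv (z.1 + 1) z.2).prod)
        (2 * a + ((z₂ :: l).map MZIndex.weight).sum) ((z₂ :: l).map MZIndex.depth).sum :=
      ⟨a, z₂ :: l, fun z hz => hl z (List.mem_cons_of_mem _ hz), rfl, rfl, rfl⟩
    have h3 := h2.mem_Vspan le_rfl le_rfl
    have := hz.two_le_weight
    have := hz₂.two_le_weight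
    have key := hS (mul_mem_Sspan (w := 2 * a + ((z₁ :: z₂ :: l).map MZIndex.weight).sum) (m := 2)
      (by omega) (by simp; omega) (by simp; omega) (by simp at hd ⊢; omega) h1 h3)
    rw [SetLike.mem_coe]
    convert key using 1
    simp only [List.map_cons, List.prod_cons]
    ring

/-- The class of `ζ(k-i+1, i+1)` modulo `S_{k+2,2}`, regularised at `i = 0` by antisymmetry. -/
noncomputable def zetaClass (k i : ℕ) : ℝ ⧸ Sspan (k + 2) 2 :=
  if i = 0 then -(Sspan (k + 2) 2).mkQ (doubleZeta 1 (k + 1))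
  else (Sspan (k + 2) 2).mkQ (doubleZeta (k - i + 1) (i + 1))

lemma zetaClass_neg {k : ℕ} (hk : 1 ≤ k) {i j : ℕ} (h : i + j = k) :
    zetaClass k i = -zetaClass k j := by
  unfold zetaClass
  rcases Nat.eq_zero_or_pos i with rfl | hi
  · obtain rfl : j = k := by omega
    rw [if_pos rfl, if_neg (by omega)]
    simp
  rcases Nat.eq_zero_or_pos j with rfl | hj
  · obtain rfl : i = k := by omega
    rw [if_pos rfl, if_neg (by omega)]
    simp
  rw [if_neg (by omega), if_neg (by omega), show k - i = j by omega, show k - j = i by omega,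
    eq_neg_iff_add_eq_zero, ← map_add, Submodule.mkQ_apply, Submodule.Quotient.mk_eq_zero]
  have hst := stuffle (a := j + 1) (b := i + 1) (by omega) (by omega)
  have h1 := mul_mem_Sspan (w := k + 2) (m := 2) (by omega) (by omega) (by omega) (by omega)
    (singleZeta_mem_Vspan (by omega : 2 ≤ j + 1)) (singleZeta_mem_Vspan (by omega : 2 ≤ i + 1))
  have h2 := Vspan_depth_sub_one_le_Sspan _ 2 (singleZeta_mem_Vspan (by omega : 2 ≤ k + 2))
  have h3 := Submodule.sub_mem _ h1 h2
  rwa [hst, show j + 1 + (i + 1) = k + 2 by omega, add_sub_cancel_right] at h3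

lemma zetaClass_shuffle_zero {k : ℕ} (hk : 1 ≤ k) :
    ∑ p ∈ antidiagonal k, ((p.1.choose 0 : ℚ) + p.1.choose k) • zetaClass k p.1 = 0 := by
  have h1 : ∑ p ∈ antidiagonal k, (p.1.choose k : ℚ) • zetaClass k p.1 = zetaClass k k := by
    rw [Finset.sum_eq_single (k, 0)]
    · simp
    · rintro ⟨i, j⟩ hp hne
      rw [HasAntidiagonal.mem_antidiagonal] at hp
      simp only [ne_eq, Prod.mk.injEq] at hne hp
      rw [Nat.choose_eq_zero_of_lt (by simp; omega)]
      simp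
    · simp
  simp only [add_smul, Finset.sum_add_distrib, h1, Nat.choose_zero_right, Nat.cast_one, one_smul]
  obtain ⟨k, rfl⟩ : ∃ l, k = l + 1 := ⟨k - 1, by omega⟩
  rw [Finset.Nat.sum_antidiagonal_succ, zetaClass_neg hk (zero_add (k + 1))]
  have h2 : ∑ p ∈ antidiagonal k, zetaClass (k + 1) (p.1 + 1) =
      (Sspan (k + 1 + 2) 2).mkQ (∑ p ∈ antidiagonal k, doubleZeta (p.2 + 1) (p.1 + 2)) := by
    rw [map_sum]
    refine Finset.sum_congr rfl fun p hp => ?_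
    rw [HasAntidiagonal.mem_antidiagonal] at hp
    rw [zetaClass, if_neg (by omega), show k + 1 - (p.1 + 1) = p.2 by omega]
  rw [h2, sum_doubleZeta]
  have h3 : (Sspan (k + 1 + 2) 2).mkQ (singleZeta (k + 3)) = 0 := by
    rw [Submodule.mkQ_apply, Submodule.Quotient.mk_eq_zero]
    exact Vspan_depth_sub_one_le_Sspan _ 2 (singleZeta_mem_Vspan (by omega))
  rw [h3]
  simp

lemma zetaClass_shuffle {k : ℕ} (hk : 1 ≤ k) {a b : ℕ} (h : a + b = k) :
    ∑ p ∈ antidiagonal k, ((p.1.choose a : ℚ) + p.1.choose b) • zetaClass k p.1 = 0 := by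
  rcases Nat.eq_zero_or_pos a with rfl | ha
  · obtain rfl : b = k := by omega
    exact zetaClass_shuffle_zero hk
  rcases Nat.eq_zero_or_pos b with rfl | hb
  · obtain rfl : a = k := by omega
    simpa only [add_comm] using zetaClass_shuffle_zero hk
  have hsh := shuffle ha hb
  rw [h] at hsh
  have h1 := mul_mem_Sspan (w := k + 2) (m := 2) (by omega) (by omega) (by omega) (by omega)
    (singleZeta_mem_Vspan (by omega : 2 ≤ a + 1)) (singleZeta_mem_Vspan (by omega : 2 ≤ b + 1))
  rw [hsh, ← Submodule.Quotient.mk_eq_zero, ← Submodule.mkQ_apply, map_sum] at h1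
  rw [← h1]
  refine Finset.sum_congr rfl fun p hp => ?_
  rw [HasAntidiagonal.mem_antidiagonal] at hp
  rcases Nat.eq_zero_or_pos p.1 with h0 | h0
  · simp [h0, Nat.choose_eq_zero_of_lt ha, Nat.choose_eq_zero_of_lt hb]
  · have hq : ((p.1.choose a : ℝ) + p.1.choose b) * doubleZeta (p.2 + 1) (p.1 + 1) =
        ((p.1.choose a : ℚ) + p.1.choose b) • doubleZeta (p.2 + 1) (p.1 + 1) := by
      rw [Rat.smul_def]
      push_cast
      rfl
    rw [hq, map_smul, zetaClass, if_neg (by omega), show k - p.1 = p.2 by omega]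

lemma mkQ_doubleZeta {k a b : ℕ} (hb : 2 ≤ b) (h : a + b = k + 2) (ha : 1 ≤ a) :
    (Sspan (k + 2) 2).mkQ (doubleZeta a b) = zetaClass k (b - 1) := by
  rw [zetaClass, if_neg (by omega), show k - (b - 1) + 1 = a by omega,
    show b - 1 + 1 = b by omega]

lemma doubleZeta_mem_Sspan {w : ℕ} (hw : Odd w) {a b : ℕ} (ha : 1 ≤ a) (hb : 2 ≤ b)
    (h : a + b = w) : doubleZeta a b ∈ Sspan w 2 := by
  obtain ⟨k, rfl⟩ : ∃ k, w = k + 2 := ⟨w - 2, by omega⟩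
  have hk : Odd k := by
    rw [Nat.odd_iff] at hw ⊢
    omega
  rw [← Submodule.Quotient.mk_eq_zero, ← Submodule.mkQ_apply, mkQ_doubleZeta hb h ha]
  exact eq_zero_of_double_shuffle hk (fun _ _ => zetaClass_neg hk.pos)
    (fun _ _ => zetaClass_shuffle hk.pos) (by omega)

lemma rank_Vspan_quotient_Sspan_le {w : ℕ} (hw : 2 ≤ w) (he : Even w) :
    Module.rank ℚ (↥(Vspan w 2) ⧸ (Sspan w 2).comap (Vspan w 2).subtype) ≤
      ((w - 2) / 6 : ℕ) := by
  obtain ⟨k, rfl⟩ : ∃ k, w = k + 2 := ⟨w - 2, by omega⟩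
  have hk : Even k := by
    rw [Nat.even_iff] at he ⊢
    omega
  rw [Nat.add_sub_cancel]
  set m := k / 6 with hm
  let T : Submodule ℚ (ℝ ⧸ Sspan (k + 2) 2) :=
    Submodule.span ℚ (Set.range fun j : Fin m => zetaClass k (2 * j + 1))
  have hV : Vspan (k + 2) 2 ≤ T.comap (Sspan (k + 2) 2).mkQ := by
    refine Vspan_two_le (by omega) ?_ fun a b ha hb h => ?_
    · intro x hx
      rw [Submodule.mem_comap, Submodule.mkQ_apply, (Submodule.Quotient.mk_eq_zero _).2 hx]
      exact T.zero_mem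
    · rw [Submodule.mem_comap, mkQ_doubleZeta hb h ha]
      have hk1 : 1 ≤ k := by omega
      exact mem_span_of_double_shuffle hk (by omega) (fun _ _ => zetaClass_neg hk1)
        (fun _ _ => zetaClass_shuffle hk1) (by omega)
  let f : (↥(Vspan (k + 2) 2) ⧸ (Sspan (k + 2) 2).comap (Vspan (k + 2) 2).subtype) →ₗ[ℚ]
      ℝ ⧸ Sspan (k + 2) 2 := Submodule.mapQ _ _ (Vspan (k + 2) 2).subtype le_rfl
  have hf : Function.Injective f := by
    rw [← LinearMap.ker_eq_bot, Submodule.ker_mapQ]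
    simp
  have hfT : ∀ x, f x ∈ T := fun x => by
    obtain ⟨v, rfl⟩ := Submodule.mkQ_surjective _ x
    exact hV v.2
  calc _ ≤ Module.rank ℚ T :=
        LinearMap.rank_le_of_injective (f.codRestrict T hfT) fun x y h =>
          hf (congrArg Subtype.val h)
    _ ≤ Cardinal.mk (Set.range fun j : Fin m => zetaClass k (2 * j + 1)) := rank_span_le _
    _ ≤ Cardinal.mk (Fin m) := Cardinal.mk_range_le
    _ = (m : ℕ) := Cardinal.mk_fin m

/-- Goncharov's depth-2 theorem: (a) if `w` is odd then `V_{w,2} = S_{w,2}`, and in particular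
every double zeta value of weight `w` lies in `S_{w,2}`; (b) if `w` is even then
`dim_ℚ V_{w,2}/S_{w,2} ≤ ⌊(w−2)/6⌋`. -/
theorem stmt4 (w : ℕ) (hw : 2 ≤ w) :
    (Odd w → Vspan w 2 = Sspan w 2 ∧
      ∀ a b : ℕ, 1 ≤ a → 2 ≤ b → a + b = w → mzv 2 ![a, b] ∈ Sspan w 2) ∧
    (Even w →
      Module.rank ℚ (↥(Vspan w 2) ⧸ (Sspan w 2).comap (Vspan w 2).subtype) ≤
        ((w - 2) / 6 : ℕ)) := by
  refine ⟨fun ho => ⟨le_antisymm ?_ (Sspan_le_Vspan w 2), fun a b ha hb h => ?_⟩,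
    rank_Vspan_quotient_Sspan_le hw⟩
  · exact Vspan_two_le (by omega) le_rfl fun a b ha hb h => doubleZeta_mem_Sspan ho ha hb h
  · rw [mzv_two]
    exact doubleZeta_mem_Sspan ho ha hb h
end
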